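/- (Ershov–He) Let n ≥ 3 and let Γ be a finite index subgroup of Aut(F_n) such that the commutator subgroup [Γ,Γ] contains [IA_n, IA_n], the commutator subgroup of the group of IA-automorphisms. Then Γ has finite abelianization: the quotient Γ/[Γ,Γ] is a finite group. In particular, every group homomorphism Γ → (ℝ,+) is trivial. -/

import Mathlib

noncomputable section

/-- The free group of rank `n`. -/
abbrev FreeGrp (n : ℕ) : Type := FreeGroup (Fin n)

/-- The automorphism group `Aut(Fₙ)`. -/
abbrev AutF (n : ℕ) : Type := MulAut (FreeGrp n)

/-- The subgroup `IAₙ ≤ Aut(Fₙ)` of automorphisms acting trivially on the abelianization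
`Fₙ^{ab} ≅ ℤⁿ`, i.e. the kernel of the natural map `Aut(Fₙ) → Aut(ℤⁿ)`. -/
def IA (n : ℕ) : Subgroup (AutF n) where
  carrier := {e | ∀ x : FreeGrp n, Abelianization.of (e x) = Abelianization.of x}
  one_mem' := fun _ => rfl
  mul_mem' := by
    intro a b ha hb x
    have h : (a * b) x = a (b x) := rfl
    rw [h, ha (b x), hb x]
  inv_mem' := by
    intro a ha x
    have h := ha (a⁻¹ x)
    have h' : a (a⁻¹ x) = x := a.apply_symm_apply x
    rw [h'] at h
    exact h.symm


noncomputable section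
namespace EH

theorem vertex_ineq {V : Type*} [NormedAddCommGroup V] [InnerProductSpace ℝ V]
    [FiniteDimensional ℝ V] (A B C : Submodule ℝ V)
    (hA : ∀ a ∈ A, C.starProjection a ∈ A) (hB : ∀ b ∈ B, C.starProjection b ∈ B)
    (h2 : ∀ a ∈ A ⊓ C, ∀ b ∈ C ⊓ B, (∀ x ∈ A ⊓ C ⊓ B, inner ℝ b x = 0) → inner ℝ a b = 0)
    (h3 : A ⊓ B ≤ C) (d1 d2 d4 d5 : V) (m1 : d1 ∈ C ⊓ B) (m2 : d2 ∈ B) (m4 : d4 ∈ A)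
    (m5 : d5 ∈ A ⊓ C)
    (hs : ∀ x ∈ A ⊓ C ⊓ B, inner ℝ (d1 + d2 + d4 + d5) x = 0) :
    ‖d1 + d2 + d4 + d5‖ ^ 2 ≤ 2 * (‖d1‖ ^ 2 + ‖d2‖ ^ 2 + ‖d4‖ ^ 2 + ‖d5‖ ^ 2) ∧
    (‖d1 + d2 + d4 + d5‖ ^ 2 = 2 * (‖d1‖ ^ 2 + ‖d2‖ ^ 2 + ‖d4‖ ^ 2 + ‖d5‖ ^ 2) → d1 = d2) := by
  set U : Submodule ℝ V := A ⊓ C ⊓ B with hU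
  have key : ∀ (Z : Submodule ℝ V) (d : V), ∃ p u : V, p ∈ Z ∧ d = p + u ∧
      (∀ x ∈ Z, inner ℝ u x = 0) ∧ p = Z.starProjection d := by
    intro Z d
    refine ⟨Z.starProjection d, d - Z.starProjection d, Submodule.starProjection_apply_mem _ _, by abel, ?_, rfl⟩
    intro x hx
    exact Submodule.starProjection_inner_eq_zero _ _ hx
  have pyth : ∀ a b : V, inner ℝ a b = 0 → ‖a + b‖ ^ 2 = ‖a‖ ^ 2 + ‖b‖ ^ 2 := by
    intro a b h
    rw [@norm_add_sq_real, h]; ring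
  have par : ∀ a b : V, ‖a + b‖ ^ 2 = 2 * ‖a‖ ^ 2 + 2 * ‖b‖ ^ 2 - ‖a - b‖ ^ 2 := by
    intro a b
    rw [@norm_add_sq_real, @norm_sub_sq_real]; ring
  obtain ⟨p1, u1, hp1, e1, o1, -⟩ := key U d1
  obtain ⟨p2, u2, hp2, e2, o2, -⟩ := key U d2
  obtain ⟨p4, u4, hp4, e4, o4, -⟩ := key U d4
  obtain ⟨p5, u5, hp5, e5, o5, -⟩ := key U d5
  have UA : ∀ x ∈ U, x ∈ A := fun x hx => hx.1.1
  have UB : ∀ x ∈ U, x ∈ B := fun x hx => hx.2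
  have UC : ∀ x ∈ U, x ∈ C := fun x hx => hx.1.2
  obtain ⟨q2, r2, hq2, f2, oo2, g2⟩ := key C u2
  obtain ⟨q4, r4, hq4, f4, oo4, g4⟩ := key C u4
  have mu1 : u1 ∈ C ⊓ B := by
    have : u1 = d1 - p1 := by rw [e1]; abel
    rw [this]; exact Submodule.sub_mem _ m1 ⟨UC _ hp1, UB _ hp1⟩
  have mu5 : u5 ∈ A ⊓ C := by
    have : u5 = d5 - p5 := by rw [e5]; abel
    rw [this]; exact Submodule.sub_mem _ m5 ⟨UA _ hp5, UC _ hp5⟩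
  have mu2 : u2 ∈ B := by
    have : u2 = d2 - p2 := by rw [e2]; abel
    rw [this]; exact Submodule.sub_mem _ m2 (UB _ hp2)
  have mu4 : u4 ∈ A := by
    have : u4 = d4 - p4 := by rw [e4]; abel
    rw [this]; exact Submodule.sub_mem _ m4 (UA _ hp4)
  have mq2 : q2 ∈ B := by rw [g2]; exact hB _ mu2
  have mq4 : q4 ∈ A := by rw [g4]; exact hA _ mu4
  have mr2 : r2 ∈ B := by
    have : r2 = u2 - q2 := by rw [f2]; abel
    rw [this]; exact Submodule.sub_mem _ mu2 mq2
  have mr4 : r4 ∈ A := by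
    have : r4 = u4 - q4 := by rw [f4]; abel
    rw [this]; exact Submodule.sub_mem _ mu4 mq4
  have oq2 : ∀ x ∈ U, inner ℝ q2 x = 0 := by
    intro x hx
    have h1 := o2 x hx
    rw [f2, inner_add_left, oo2 x (UC x hx)] at h1
    linarith
  have psum : p1 + p2 + p4 + p5 = 0 := by
    have hm : p1 + p2 + p4 + p5 ∈ U :=
      U.add_mem (U.add_mem (U.add_mem hp1 hp2) hp4) hp5
    have h1 := hs _ hm
    have : d1 + d2 + d4 + d5 = (p1 + p2 + p4 + p5) + (u1 + u2 + u4 + u5) := by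
      rw [e1, e2, e4, e5]; abel
    have h0 : inner ℝ (u1 + u2 + u4 + u5) (p1 + p2 + p4 + p5) = 0 := by
      rw [inner_add_left, inner_add_left, inner_add_left, o1 _ hm, o2 _ hm, o4 _ hm, o5 _ hm]
      norm_num
    rw [this, inner_add_left, h0] at h1
    have h1' : inner ℝ (p1 + p2 + p4 + p5) (p1 + p2 + p4 + p5) = 0 := by linarith
    exact inner_self_eq_zero.mp h1'
  have ssum : d1 + d2 + d4 + d5 = ((u1 + q2) + (u5 + q4)) + (r2 + r4) := by
    have : d1 + d2 + d4 + d5 = (p1 + p2 + p4 + p5) + (u1 + u2 + u4 + u5) := by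
      rw [e1, e2, e4, e5]; abel
    rw [this, psum, f2, f4]; abel
  have mm1 : u1 + q2 ∈ C ⊓ B := Submodule.add_mem _ mu1 ⟨hq2, mq2⟩
  have mm5 : u5 + q4 ∈ A ⊓ C := Submodule.add_mem _ mu5 ⟨mq4, hq4⟩
  have n1 : inner ℝ (u1 + q2) (u5 + q4) = 0 := by
    rw [real_inner_comm]
    apply h2 _ mm5 _ mm1
    intro x hx
    rw [inner_add_left, o1 x hx, oq2 x hx, add_zero]
  have n2 : inner ℝ ((u1 + q2) + (u5 + q4)) (r2 + r4) = 0 := by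
    have hm : (u1 + q2) + (u5 + q4) ∈ C := C.add_mem mm1.1 mm5.2
    rw [real_inner_comm, inner_add_left, oo2 _ hm, oo4 _ hm, add_zero]
  have E0 : ‖d1 + d2 + d4 + d5‖ ^ 2 = ‖u1 + q2‖ ^ 2 + ‖u5 + q4‖ ^ 2 + ‖r2 + r4‖ ^ 2 := by
    rw [ssum, pyth _ _ n2, pyth _ _ n1]
  have F1 : ‖d1‖ ^ 2 = ‖p1‖ ^ 2 + ‖u1‖ ^ 2 := by
    rw [e1]; apply pyth; rw [real_inner_comm]; exact o1 _ hp1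
  have F2 : ‖d2‖ ^ 2 = ‖p2‖ ^ 2 + ‖u2‖ ^ 2 := by
    rw [e2]; apply pyth; rw [real_inner_comm]; exact o2 _ hp2
  have F4 : ‖d4‖ ^ 2 = ‖p4‖ ^ 2 + ‖u4‖ ^ 2 := by
    rw [e4]; apply pyth; rw [real_inner_comm]; exact o4 _ hp4
  have F5 : ‖d5‖ ^ 2 = ‖p5‖ ^ 2 + ‖u5‖ ^ 2 := by
    rw [e5]; apply pyth; rw [real_inner_comm]; exact o5 _ hp5
  have F2' : ‖u2‖ ^ 2 = ‖q2‖ ^ 2 + ‖r2‖ ^ 2 := by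
    rw [f2]; apply pyth; rw [real_inner_comm]; exact oo2 _ hq2
  have F4' : ‖u4‖ ^ 2 = ‖q4‖ ^ 2 + ‖r4‖ ^ 2 := by
    rw [f4]; apply pyth; rw [real_inner_comm]; exact oo4 _ hq4
  rw [par u1 q2, par u5 q4, par r2 r4] at E0
  have sq : ∀ x : V, 0 ≤ ‖x‖ ^ 2 := fun x => sq_nonneg _
  have s1 := sq p1
  have s2 := sq p2
  have s4 := sq p4
  have s5 := sq p5
  have s6 := sq (u1 - q2)
  have s7 := sq (u5 - q4)
  have s8 := sq (r2 - r4)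
  constructor
  · rw [E0, F1, F2, F4, F5, F2', F4']; linarith
  · intro heq
    rw [E0, F1, F2, F4, F5, F2', F4'] at heq
    have z0 : ∀ x : V, ‖x‖ ^ 2 = 0 → x = 0 := by
      intro x hx
      exact norm_eq_zero.mp (pow_eq_zero_iff (two_ne_zero) |>.mp hx)
    have z1 : p1 = 0 := z0 _ (by linarith)
    have z2 : p2 = 0 := z0 _ (by linarith)
    have z6 : u1 - q2 = 0 := z0 _ (by linarith)
    have z8 : r2 - r4 = 0 := z0 _ (by linarith)
    have hr : r2 = r4 := sub_eq_zero.mp z8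
    have hr2 : r2 ∈ C := h3 ⟨hr ▸ mr4, mr2⟩
    have hr0 : r2 = 0 := inner_self_eq_zero.mp (oo2 _ hr2)
    rw [e1, e2, z1, z2, f2, hr0, sub_eq_zero.mp z6]; simp

theorem hexagon_id {V : Type*} [NormedAddCommGroup V] [InnerProductSpace ℝ V]
    (z : ZMod 6 → V) :
    ∑ v, ‖(z v - z (v + 1)) + (z v - z (v + 2)) + (z v - z (v + 4)) + (z v - z (v + 5))‖ ^ 2
     = 2 * ∑ v, (‖z v - z (v + 1)‖ ^ 2 + ‖z v - z (v + 2)‖ ^ 2 + ‖z v - z (v + 4)‖ ^ 2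
        + ‖z v - z (v + 5)‖ ^ 2)
      + 3 * ∑ v, ‖z v + z (v + 3) - (1 / 3 : ℝ) • ∑ w, z w‖ ^ 2 := by
  have hsum : ∀ {M : Type _} [AddCommMonoid M] (g : ZMod 6 → M),
      ∑ v, g v = g 0 + g 1 + g 2 + g 3 + g 4 + g 5 := by
    intro M _ g
    exact Fin.sum_univ_six g
  have hsumV : ∑ v, z v = z 0 + z 1 + z 2 + z 3 + z 4 + z 5 := Fin.sum_univ_six z
  rw [hsumV]
  rw [hsum, hsum, hsum]
  have a1 : (1 : ZMod 6) + 1 = 2 := by decide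
  have a2 : (2 : ZMod 6) + 1 = 3 := by decide
  have a3 : (3 : ZMod 6) + 1 = 4 := by decide
  have a4 : (4 : ZMod 6) + 1 = 5 := by decide
  have a5 : (5 : ZMod 6) + 1 = 0 := by decide
  have b1 : (1 : ZMod 6) + 2 = 3 := by decide
  have b2 : (2 : ZMod 6) + 2 = 4 := by decide
  have b3 : (3 : ZMod 6) + 2 = 5 := by decide
  have b4 : (4 : ZMod 6) + 2 = 0 := by decide
  have b5 : (5 : ZMod 6) + 2 = 1 := by decide
  have c1 : (1 : ZMod 6) + 4 = 5 := by decide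
  have c2 : (2 : ZMod 6) + 4 = 0 := by decide
  have c3 : (3 : ZMod 6) + 4 = 1 := by decide
  have c4 : (4 : ZMod 6) + 4 = 2 := by decide
  have c5 : (5 : ZMod 6) + 4 = 3 := by decide
  have d1 : (1 : ZMod 6) + 5 = 0 := by decide
  have d2 : (2 : ZMod 6) + 5 = 1 := by decide
  have d3 : (3 : ZMod 6) + 5 = 2 := by decide
  have d4 : (4 : ZMod 6) + 5 = 3 := by decide
  have d5 : (5 : ZMod 6) + 5 = 4 := by decide
  have e1 : (1 : ZMod 6) + 3 = 4 := by decide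
  have e2 : (2 : ZMod 6) + 3 = 5 := by decide
  have e3 : (3 : ZMod 6) + 3 = 0 := by decide
  have e4 : (4 : ZMod 6) + 3 = 1 := by decide
  have e5 : (5 : ZMod 6) + 3 = 2 := by decide
  simp only [zero_add, a1, a2, a3, a4, a5, b1, b2, b3, b4, b5, c1, c2, c3, c4, c5, d1, d2, d3, d4,
    d5, e1, e2, e3, e4, e5]
  generalize z 0 = x0
  generalize z 1 = x1
  generalize z 2 = x2
  generalize z 3 = x3
  generalize z 4 = x4
  generalize z 5 = x5
  simp only [← real_inner_self_eq_norm_sq, inner_add_left, inner_add_right, inner_sub_left,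
    inner_sub_right, inner_smul_left, inner_smul_right]
  rw [real_inner_comm x0 x1, real_inner_comm x0 x2, real_inner_comm x0 x3, real_inner_comm x0 x4,
    real_inner_comm x0 x5, real_inner_comm x1 x2, real_inner_comm x1 x3, real_inner_comm x1 x4,
    real_inner_comm x1 x5, real_inner_comm x2 x3, real_inner_comm x2 x4, real_inner_comm x2 x5,
    real_inner_comm x3 x4, real_inner_comm x3 x5, real_inner_comm x4 x5]
  simp only [map_div₀, map_one, map_ofNat]
  ring

theorem exists_orth {V : Type*} [NormedAddCommGroup V] [InnerProductSpace ℝ V]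
    [FiniteDimensional ℝ V] (U : ZMod 6 → Submodule ℝ V) (z0 : ZMod 6 → V) :
    ∃ y : ZMod 6 → V, (∀ v, y v ∈ U v) ∧ ∀ v, ∀ x ∈ U v,
      inner ℝ (((z0 v - y v) - (z0 (v + 1) - y (v + 1))) + ((z0 v - y v) - (z0 (v + 2) - y (v + 2)))
       + ((z0 v - y v) - (z0 (v + 4) - y (v + 4))) + ((z0 v - y v) - (z0 (v + 5) - y (v + 5)))) x
        = 0 := by
  let D : (ZMod 6 → V) →ₗ[ℝ] PiLp 2 (fun _ : ZMod 6 × Bool => V) :=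
    { toFun := fun z => WithLp.toLp 2 (fun p => if p.2 then z p.1 - z (p.1 + 1) else z p.1 - z (p.1 + 2))
      map_add' := by
        intro x y; ext p; simp; split_ifs <;> abel
      map_smul' := by
        intro c x; ext p; simp; split_ifs <;> rw [smul_sub] }
  let R : Submodule ℝ (PiLp 2 (fun _ : ZMod 6 × Bool => V)) := (Submodule.pi Set.univ U).map D
  have hm : R.starProjection (D z0) ∈ R := Submodule.starProjection_apply_mem _ _
  obtain ⟨y, hy, hyD⟩ := hm
  refine ⟨y, fun v => hy v (Set.mem_univ v), ?_⟩
  intro v x hx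
  have hsing : D (Pi.single v x) ∈ R := by
    refine ⟨Pi.single v x, ?_, rfl⟩
    intro w _
    by_cases h : w = v
    · subst h; simpa using hx
    · simp [Pi.single_eq_of_ne h]
  have h0 := Submodule.starProjection_inner_eq_zero (K := R) (D z0) _ hsing
  rw [← hyD, ← map_sub, PiLp.inner_apply, Fintype.sum_prod_type] at h0
  simp only [Fintype.sum_bool, D, LinearMap.coe_mk, AddHom.coe_mk, if_true, Bool.false_eq_true, if_false,
    inner_sub_right, Finset.sum_add_distrib, Finset.sum_sub_distrib, Pi.sub_apply] at h0
  have s0 : ∀ g : ZMod 6 → V, ∀ c : ZMod 6, ∑ w, inner ℝ (g w) ((Pi.single v x : ZMod 6 → V) (w + c))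
      = inner ℝ (g (v - c)) x := by
    intro g c
    rw [Finset.sum_eq_single (v - c)]
    · simp
    · intro b _ hb
      have : b + c ≠ v := fun h => hb (by rw [← h]; abel)
      simp [Pi.single_eq_of_ne this]
    · simp
  have s00 := fun g : ZMod 6 → V => s0 g 0
  simp only [add_zero, sub_zero] at s00
  rw [s00 (fun w => z0 w - y w - (z0 (w + 1) - y (w + 1))),
    s00 (fun w => z0 w - y w - (z0 (w + 2) - y (w + 2))),
    s0 (fun w => z0 w - y w - (z0 (w + 1) - y (w + 1))) 1,
    s0 (fun w => z0 w - y w - (z0 (w + 2) - y (w + 2))) 2] at h0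
  have t1 : v + 5 = v - 1 := by
    have : (5 : ZMod 6) = -1 := by decide
    rw [this]; abel
  have t2 : v + 4 = v - 2 := by
    have : (4 : ZMod 6) = -2 := by decide
    rw [this]; abel
  rw [t1, t2]
  simp only [sub_add_cancel] at h0
  rw [← h0]
  simp only [inner_add_left, inner_sub_left]
  ring

theorem hexagon_fix {V : Type*} [NormedAddCommGroup V] [InnerProductSpace ℝ V]
    [FiniteDimensional ℝ V] (W : ZMod 6 → Submodule ℝ V)
    (hA : ∀ v, ∀ a ∈ W v, (W (v + 1)).starProjection a ∈ W v)
    (hB : ∀ v, ∀ b ∈ W (v + 2), (W (v + 1)).starProjection b ∈ W (v + 2))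
    (h2 : ∀ v, ∀ a ∈ W v ⊓ W (v + 1), ∀ b ∈ W (v + 1) ⊓ W (v + 2),
      (∀ x ∈ W v ⊓ W (v + 1) ⊓ W (v + 2), inner ℝ b x = 0) → inner ℝ a b = 0)
    (h3 : ∀ v, W v ⊓ W (v + 2) ≤ W (v + 1))
    (z0 : ZMod 6 → V)
    (hz1 : ∀ v, z0 v - z0 (v + 1) ∈ W (v + 1) ⊓ W (v + 2))
    (hz2 : ∀ v, z0 v - z0 (v + 2) ∈ W (v + 2)) :
    ∃ y : ZMod 6 → V, (∀ v, y v ∈ W v ⊓ W (v + 1) ⊓ W (v + 2)) ∧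
      ∀ v w, z0 v - y v = z0 w - y w := by
  obtain ⟨y, hy, ho⟩ := exists_orth (fun v => W v ⊓ W (v + 1) ⊓ W (v + 2)) z0
  refine ⟨y, hy, ?_⟩
  set z : ZMod 6 → V := fun v => z0 v - y v with hz
  have hd1 : ∀ v, z v - z (v + 1) ∈ W (v + 1) ⊓ W (v + 2) := by
    intro v
    have e : z v - z (v + 1) = (z0 v - z0 (v + 1)) - y v + y (v + 1) := by simp [hz]; abel
    rw [e]
    have q1 := hy v
    have q2 := hy (v + 1)
    have : v + 1 + 1 = v + 2 := by rw [add_assoc]; rfl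
    rw [this] at q2
    exact Submodule.add_mem _ (Submodule.sub_mem _ (hz1 v) ⟨q1.1.2, q1.2⟩) ⟨q2.1.1, q2.1.2⟩
  have hd2 : ∀ v, z v - z (v + 2) ∈ W (v + 2) := by
    intro v
    have e : z v - z (v + 2) = (z0 v - z0 (v + 2)) - y v + y (v + 2) := by simp [hz]; abel
    rw [e]
    exact Submodule.add_mem _ (Submodule.sub_mem _ (hz2 v) (hy v).2) (hy (v + 2)).1.1
  have hd5 : ∀ v, z v - z (v + 5) ∈ W v ⊓ W (v + 1) := by
    intro v
    have q := hd1 (v + 5)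
    have a1 : v + 5 + 1 = v := by
      have : (5 : ZMod 6) + 1 = 0 := by decide
      rw [add_assoc, this, add_zero]
    have a2 : v + 5 + 2 = v + 1 := by
      have : (5 : ZMod 6) + 2 = 1 := by decide
      rw [add_assoc, this]
    rw [a1, a2] at q
    rw [← neg_sub]; exact Submodule.neg_mem _ q
  have hd4 : ∀ v, z v - z (v + 4) ∈ W v := by
    intro v
    have q := hd2 (v + 4)
    have a1 : v + 4 + 2 = v := by
      have : (4 : ZMod 6) + 2 = 0 := by decide
      rw [add_assoc, this, add_zero]
    rw [a1] at q
    rw [← neg_sub]; exact Submodule.neg_mem _ q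
  have loc := fun v => vertex_ineq (W v) (W (v + 2)) (W (v + 1)) (hA v) (hB v) (h2 v) (h3 v)
    (z v - z (v + 1)) (z v - z (v + 2)) (z v - z (v + 4)) (z v - z (v + 5)) (hd1 v) (hd2 v) (hd4 v)
    (hd5 v) (ho v)
  have hid := hexagon_id z
  have hnn : 0 ≤ ∑ v, ‖z v + z (v + 3) - (1 / 3 : ℝ) • ∑ w, z w‖ ^ 2 :=
    Finset.sum_nonneg (fun _ _ => sq_nonneg _)
  have hle := fun v => (loc v).1
  have hsumeq : ∑ v, ‖(z v - z (v + 1)) + (z v - z (v + 2)) + (z v - z (v + 4)) + (z v - z (v + 5))‖ ^ 2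
     = ∑ v, 2 * (‖z v - z (v + 1)‖ ^ 2 + ‖z v - z (v + 2)‖ ^ 2 + ‖z v - z (v + 4)‖ ^ 2
        + ‖z v - z (v + 5)‖ ^ 2) := by
    apply le_antisymm
    · exact Finset.sum_le_sum (fun v _ => hle v)
    · rw [← Finset.mul_sum, hid]; linarith
  have heq := (Finset.sum_eq_sum_iff_of_le (fun v _ => hle v)).mp hsumeq
  have step : ∀ v, z (v + 1) = z (v + 2) := by
    intro v
    have := (loc v).2 (heq v (Finset.mem_univ v))
    exact sub_right_inj.mp this
  have step' : ∀ v, z v = z (v + 1) := by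
    intro v
    have := step (v - 1)
    have a : v - 1 + 1 = v := by abel
    have b : v - 1 + 2 = v + 1 := by
      have : (2 : ZMod 6) = 1 + 1 := by decide
      rw [this]; abel
    rwa [a, b] at this
  have all : ∀ k : ℕ, z (k : ZMod 6) = z 0 := by
    intro k
    induction k with
    | zero => simp
    | succ k ih => rw [Nat.cast_succ, ← step', ih]
  have all' : ∀ v, z v = z 0 := by
    intro v
    have := all v.val
    rwa [ZMod.natCast_zmod_val] at this
  intro v w
  exact (all' v).trans (all' w).symm
end EH
end


noncomputable section
namespace EH

section induced
open scoped commutatorElement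
variable {G : Type*} [Group G] (Γ : Subgroup G) [Fintype (G ⧸ Γ)]

/-- permutation representation on functions on cosets -/
abbrev IndV : Type _ := EuclideanSpace ℝ (G ⧸ Γ)

/-- translation -/
def transl (x : G) : EuclideanSpace ℝ (G ⧸ Γ) ≃ₗᵢ[ℝ] EuclideanSpace ℝ (G ⧸ Γ) :=
  LinearIsometryEquiv.piLpCongrLeft 2 ℝ ℝ (MulAction.toPerm x)

theorem transl_apply (x : G) (v : EuclideanSpace ℝ (G ⧸ Γ)) (c : G ⧸ Γ) :
    transl Γ x v c = v (x⁻¹ • c) := by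
  simp [transl, LinearIsometryEquiv.piLpCongrLeft_apply, Equiv.piCongrLeft']

/-- invariants -/
def inv (X : Subgroup G) : Submodule ℝ (EuclideanSpace ℝ (G ⧸ Γ)) where
  carrier := {v | ∀ x ∈ X, ∀ c, v (x • c) = v c}
  zero_mem' := by intro x _ c; simp
  add_mem' := by
    intro a b ha hb x hx c
    simp [ha x hx c, hb x hx c]
  smul_mem' := by
    intro r a ha x hx c
    simp [ha x hx c]

theorem mem_inv (X : Subgroup G) (v : EuclideanSpace ℝ (G ⧸ Γ)) :
    v ∈ inv Γ X ↔ ∀ x ∈ X, ∀ c, v (x • c) = v c := Iff.rfl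

theorem mem_inv_iff (X : Subgroup G) (v : EuclideanSpace ℝ (G ⧸ Γ)) :
    v ∈ inv Γ X ↔ ∀ x ∈ X, transl Γ x v = v := by
  constructor
  · intro h x hx
    ext c
    rw [transl_apply, h _ (X.inv_mem hx)]
  · intro h x hx c
    have := h _ (X.inv_mem hx)
    have h2 := congrArg (fun w : EuclideanSpace ℝ (G ⧸ Γ) => w c) this
    simpa [transl_apply] using h2

theorem proj_inv (X : Subgroup G) (Z : Submodule ℝ (EuclideanSpace ℝ (G ⧸ Γ)))
    (hZ : ∀ x ∈ X, ∀ v ∈ Z, transl Γ x v ∈ Z) (a : EuclideanSpace ℝ (G ⧸ Γ)) (ha : a ∈ inv Γ X) :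
    Z.starProjection a ∈ inv Γ X := by
  rw [mem_inv_iff] at ha ⊢
  intro x hx
  symm
  apply Submodule.eq_starProjection_of_mem_of_inner_eq_zero
  · exact hZ x hx _ (Submodule.starProjection_apply_mem _ _)
  · intro w hw
    have h1 : a - transl Γ x (Z.starProjection a) = transl Γ x (a - Z.starProjection a) := by
      rw [map_sub, ha x hx]
    have h2 : w = transl Γ x (transl Γ x⁻¹ w) := by
      ext c; simp [transl_apply]
    rw [h1, h2, LinearIsometryEquiv.inner_map_map]
    exact Submodule.starProjection_inner_eq_zero _ _ (hZ _ (X.inv_mem hx) _ hw)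

theorem transl_mem_inv (Y : Subgroup G) (x : G) (hY : ∀ y ∈ Y, x⁻¹ * y * x ∈ Y)
    (v : EuclideanSpace ℝ (G ⧸ Γ)) (hv : v ∈ inv Γ Y) : transl Γ x v ∈ inv Γ Y := by
  intro y hy c
  rw [transl_apply, transl_apply]
  have := hv _ (hY y hy) (x⁻¹ • c)
  rw [← this]
  congr 1
  simp [mul_smul]

theorem inv_sup (X Y : Subgroup G) : inv Γ X ⊓ inv Γ Y = inv Γ (X ⊔ Y) := by
  ext v
  constructor
  · rintro ⟨h1, h2⟩
    have : X ⊔ Y ≤ { carrier := {x | ∀ c, v (x • c) = v c}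
                     one_mem' := by intro c; simp
                     mul_mem' := by
                       intro a b ha hb c
                       rw [mul_smul, ha, hb]
                     inv_mem' := by
                       intro a ha c
                       have := ha (a⁻¹ • c)
                       rw [smul_inv_smul] at this
                       exact this.symm : Subgroup G} := sup_le h1 h2
    exact fun x hx => this hx
  · intro h
    exact ⟨fun x hx => h x (Subgroup.mem_sup_left hx), fun x hx => h x (Subgroup.mem_sup_right hx)⟩

theorem exists_equiv_fun (f : Γ →* Multiplicative ℝ) (B : Subgroup G)
    (hB : ∀ (g : G) (γ : Γ), g * γ * g⁻¹ ∈ B → f γ = 1) :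
    ∃ F : G → ℝ, (∀ g (γ : Γ), F (g * γ) = F g + (f γ).toAdd) ∧ ∀ b ∈ B, ∀ g, F (b * g) = F g := by
  let s : Setoid G := DoubleCoset.setoid (B : Set G) (Γ : Set G)
  let r : G → G := fun g => (Quotient.mk s g).out
  have hr : ∀ g, ∃ b ∈ B, ∃ γ : Γ, g = b * r g * γ := by
    intro g
    have : s (r g) g := Quotient.mk_out (s := s) g
    rw [DoubleCoset.rel_iff] at this
    obtain ⟨b, hb, γ, hγ, e⟩ := this
    exact ⟨b, hb, ⟨γ, hγ⟩, e⟩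
  have hrr : ∀ g b, b ∈ B → ∀ γ : Γ, r (b * g * γ) = r g := by
    intro g b hb γ
    have : s g (b * g * γ) := by
      rw [DoubleCoset.rel_iff]
      exact ⟨b, hb, γ, γ.2, rfl⟩
    show (Quotient.mk s _).out = (Quotient.mk s _).out
    rw [Quotient.sound this]
  choose b hb γ e using hr
  have key : ∀ g b', b' ∈ B → ∀ γ' : Γ, g = b' * r g * γ' → f (γ g) = f γ' := by
    intro g b' hb' γ' e'
    have h1 : f (γ g * γ'⁻¹) = 1 := by
      apply hB (r g)
      have : r g * ((γ g * γ'⁻¹ : Γ) : G) * (r g)⁻¹ = (b g)⁻¹ * b' := by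
        have h2 : b g * r g * γ g = b' * r g * γ' := (e g).symm.trans e'
        have h3 : r g * (γ g : G) = (b g)⁻¹ * (b' * r g * γ') := by rw [← h2]; group
        push_cast
        rw [← mul_assoc, h3]; group
      rw [this]
      exact B.mul_mem (B.inv_mem (hb g)) hb'
    rw [map_mul, map_inv] at h1
    exact mul_inv_eq_one.mp h1
  refine ⟨fun g => (f (γ g)).toAdd, ?_, ?_⟩
  · intro g γ'
    have : f (γ (g * γ')) = f (γ g * γ') := by
      apply key _ (b g) (hb g)
      have h1 := hrr g 1 B.one_mem γ'
      rw [one_mul] at h1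
      rw [h1]
      push_cast
      rw [← mul_assoc, ← e g]
    simp only [this, map_mul, toAdd_mul]
  · intro b' hb' g
    have : f (γ (b' * g)) = f (γ g) := by
      apply key _ (b' * b g) (B.mul_mem hb' (hb g))
      have h1 := hrr g b' hb' 1
      rw [Subgroup.coe_one, mul_one] at h1
      rw [h1]
      conv_lhs => rw [e g]
      group
    simp only [this]

/-- Main fixed point theorem for groups graded by `A₂`. -/
theorem hexagon_group (f : Γ →* Multiplicative ℝ) (X : ZMod 6 → Subgroup G)
    (hc : ∀ v, ∀ x ∈ X v, ∀ y ∈ X (v + 1), x * y = y * x)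
    (hc2 : ∀ v, ∀ x ∈ X v, ∀ y ∈ X (v + 2), ⁅x, y⁆ ∈ X (v + 1))
    (hg : ∀ v, X (v + 1) ≤ X v ⊔ X (v + 2))
    (hf : ∀ v, ∀ (g : G) (γ : Γ), g * γ * g⁻¹ ∈ X v ⊔ X (v + 1) ⊔ X (v + 2) → f γ = 1) :
    ∀ γ : Γ, (γ : G) ∈ ⨆ v, X v → f γ = 1 := by
  have hF := fun v => exists_equiv_fun Γ f _ (hf v)
  choose F hF1 hF2 using hF
  let W : ZMod 6 → Submodule ℝ (EuclideanSpace ℝ (G ⧸ Γ)) := fun v => inv Γ (X v)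
  let z0 : ZMod 6 → EuclideanSpace ℝ (G ⧸ Γ) :=
    fun v => WithLp.toLp 2 (fun c => F v c.out - F 0 c.out)
  have hz0 : ∀ v w (g : G), z0 v (g : G ⧸ Γ) - z0 w (g : G ⧸ Γ) = F v g - F w g := by
    intro v w g
    obtain ⟨γ, hγ⟩ := QuotientGroup.mk_out_eq_mul Γ g
    simp only [z0, hγ, hF1]; ring
  have hv1 : ∀ v x, x ∈ X v → ∀ g, F v (x * g) = F v g := fun v x hx g =>
    hF2 v x (Subgroup.mem_sup_left (Subgroup.mem_sup_left hx)) g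
  have hv2 : ∀ v x, x ∈ X (v + 1) → ∀ g, F v (x * g) = F v g := fun v x hx g =>
    hF2 v x (Subgroup.mem_sup_left (Subgroup.mem_sup_right hx)) g
  have hv3 : ∀ v x, x ∈ X (v + 2) → ∀ g, F v (x * g) = F v g := fun v x hx g =>
    hF2 v x (Subgroup.mem_sup_right hx) g
  have hdiff : ∀ v w (Y : Subgroup G), (∀ x ∈ Y, ∀ g, F v (x * g) = F v g) →
      (∀ x ∈ Y, ∀ g, F w (x * g) = F w g) → z0 v - z0 w ∈ inv Γ Y := by
    intro v w Y h1 h2 x hx c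
    induction c using QuotientGroup.induction_on with
    | H g =>
      have : x • (g : G ⧸ Γ) = ((x * g : G) : G ⧸ Γ) := rfl
      rw [this, PiLp.sub_apply, PiLp.sub_apply, hz0, hz0, h1 x hx, h2 x hx]
  have add12 : ∀ v : ZMod 6, v + 1 + 1 = v + 2 := fun v => by rw [add_assoc]; rfl
  have conjC : ∀ v, ∀ x ∈ X v, ∀ y ∈ X (v + 1), x⁻¹ * y * x = y := by
    intro v x hx y hy
    rw [mul_assoc, ← hc v x hx y hy]; group
  have conjC' : ∀ v, ∀ x ∈ X (v + 1), ∀ y ∈ X v, x⁻¹ * y * x = y := by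
    intro v x hx y hy
    rw [mul_assoc, hc v y hy x hx]; group
  have hA : ∀ v, ∀ a ∈ W v, (W (v + 1)).starProjection a ∈ W v := by
    intro v a ha
    apply proj_inv Γ _ _ _ a ha
    intro x hx u hu
    apply transl_mem_inv _ _ _ _ _ hu
    intro y hy
    rw [conjC v x hx y hy]; exact hy
  have hB : ∀ v, ∀ a ∈ W (v + 2), (W (v + 1)).starProjection a ∈ W (v + 2) := by
    intro v a ha
    apply proj_inv Γ _ _ _ a ha
    intro x hx u hu
    apply transl_mem_inv _ _ _ _ _ hu
    intro y hy
    rw [← add12] at hx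
    rw [conjC' (v + 1) x hx y hy]; exact hy
  have h2 : ∀ v, ∀ a ∈ W v ⊓ W (v + 1), ∀ b ∈ W (v + 1) ⊓ W (v + 2),
      (∀ x ∈ W v ⊓ W (v + 1) ⊓ W (v + 2), inner ℝ b x = 0) → inner ℝ a b = 0 := by
    intro v a ha b hb hx
    have hZ : ∀ x ∈ X v, ∀ u ∈ W (v + 1) ⊓ W (v + 2), transl Γ x u ∈ W (v + 1) ⊓ W (v + 2) := by
      intro x hx u hu
      show _ ∈ inv Γ _ ⊓ inv Γ _
      have hu' : u ∈ inv Γ (X (v + 1)) ⊓ inv Γ (X (v + 2)) := hu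
      rw [inv_sup] at hu' ⊢
      apply transl_mem_inv _ _ _ _ _ hu'
      intro y hy
      have : (X (v + 1) ⊔ X (v + 2)) ≤ (X (v + 1) ⊔ X (v + 2)).comap (MulAut.conj x⁻¹).toMonoidHom := by
        rw [sup_le_iff]
        constructor
        · intro y hy
          show x⁻¹ * y * x⁻¹⁻¹ ∈ X (v + 1) ⊔ X (v + 2)
          rw [inv_inv, conjC v x hx y hy]; exact Subgroup.mem_sup_left hy
        · intro y hy
          show x⁻¹ * y * x⁻¹⁻¹ ∈ X (v + 1) ⊔ X (v + 2)
          have e : x⁻¹ * y * x⁻¹⁻¹ = ⁅x⁻¹, y⁆ * y := by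
            rw [commutatorElement_def]; group
          rw [e]
          exact Subgroup.mul_mem _ (Subgroup.mem_sup_left (hc2 v _ ((X v).inv_mem hx) y hy))
            (Subgroup.mem_sup_right hy)
      have := this hy
      change x⁻¹ * y * x⁻¹⁻¹ ∈ X (v + 1) ⊔ X (v + 2) at this
      rwa [inv_inv] at this
    have hp := proj_inv Γ (X v) (W (v + 1) ⊓ W (v + 2)) hZ a ha.1
    have hp2 : (W (v + 1) ⊓ W (v + 2)).starProjection a ∈ W (v + 1) ⊓ W (v + 2) :=
      Submodule.starProjection_apply_mem _ _
    have h0 := hx _ ⟨⟨hp, hp2.1⟩, hp2.2⟩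
    have h1 := Submodule.starProjection_inner_eq_zero (K := W (v + 1) ⊓ W (v + 2)) a b hb
    rw [real_inner_comm] at h0
    rw [inner_sub_left, h0] at h1
    linarith
  have h3 : ∀ v, W v ⊓ W (v + 2) ≤ W (v + 1) := by
    intro v u hu
    have hu' : u ∈ inv Γ (X v) ⊓ inv Γ (X (v + 2)) := hu
    rw [inv_sup] at hu'
    exact fun x hx => hu' x (hg v hx)
  obtain ⟨y, hy, hyz⟩ := hexagon_fix W hA hB h2 h3 z0
    (by
      intro v
      refine ⟨hdiff _ _ _ (hv2 v) (hv1 _), hdiff _ _ _ (hv3 v) ?_⟩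
      rw [← add12]; exact hv2 (v + 1))
    (by
      intro v
      exact hdiff _ _ _ (hv3 v) (hv1 _))
  let Φ : G → ℝ := fun g => F 0 g - y 0 (g : G ⧸ Γ)
  have hΦ : ∀ v g, Φ g = F v g - y v (g : G ⧸ Γ) := by
    intro v g
    have h1 := congrArg (fun u : EuclideanSpace ℝ (G ⧸ Γ) => u (g : G ⧸ Γ)) (hyz v 0)
    simp only [PiLp.sub_apply] at h1
    have h2 := hz0 v 0 g
    simp only [Φ]; linarith
  have hinv : (⨆ v, X v) ≤ 
      { carrier := {x | ∀ g, Φ (x * g) = Φ g}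
        one_mem' := by intro g; simp
        mul_mem' := by
          intro a b ha hb g
          rw [mul_assoc, ha, hb]
        inv_mem' := by
          intro a ha g
          have := ha (a⁻¹ * g)
          rw [mul_inv_cancel_left] at this
          exact this.symm : Subgroup G} := by
    apply iSup_le
    intro v x hx g
    rw [hΦ v, hΦ v, hv1 v x hx]
    have := (hy v).1.1 x hx (g : G ⧸ Γ)
    have e : x • (g : G ⧸ Γ) = ((x * g : G) : G ⧸ Γ) := rfl
    rw [← this, e]
  intro γ hγ
  have h1 := hinv hγ 1
  have h2 : Φ (1 * γ) = Φ 1 + (f γ).toAdd := by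
    simp only [Φ]
    rw [hF1]
    have : ((1 * (γ : G) : G) : G ⧸ Γ) = ((1 : G) : G ⧸ Γ) := by
      rw [QuotientGroup.eq]; simp
    rw [this]; ring
  rw [one_mul] at h2
  rw [mul_one, h2] at h1
  have h4 : (f γ).toAdd = 0 := by linarith
  exact Multiplicative.toAdd.injective h4

end induced
end EH
end


noncomputable section
namespace EH
section steinberg
open scoped commutatorElement

theorem comm_closure {G : Type*} [Group G] (S T : Set G)
    (h : ∀ s ∈ S, ∀ t ∈ T, s * t = t * s) :
    ∀ x ∈ Subgroup.closure S, ∀ y ∈ Subgroup.closure T, x * y = y * x := by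
  have h1 : ∀ t ∈ T, ∀ x ∈ Subgroup.closure S, x * t = t * x := by
    intro t ht x hx
    have : Subgroup.closure S ≤ Subgroup.centralizer {t} := by
      rw [Subgroup.closure_le]
      intro s hs
      rw [SetLike.mem_coe, Subgroup.mem_centralizer_singleton_iff]
      exact h s hs t ht
    have := this hx
    rwa [Subgroup.mem_centralizer_singleton_iff] at this
  intro x hx y hy
  have : Subgroup.closure T ≤ Subgroup.centralizer {x} := by
    rw [Subgroup.closure_le]
    intro t ht
    rw [SetLike.mem_coe, Subgroup.mem_centralizer_singleton_iff]
    exact (h1 t ht x hx).symm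
  have := this hy
  rw [Subgroup.mem_centralizer_singleton_iff] at this
  exact this.symm

theorem commutator_closure {G : Type*} [Group G] (S T : Set G) (C : Subgroup G)
    (hS : ∀ x ∈ Subgroup.closure S, ∀ c ∈ C, x * c = c * x)
    (hT : ∀ x ∈ Subgroup.closure T, ∀ c ∈ C, x * c = c * x)
    (h : ∀ s ∈ S, ∀ t ∈ T, ⁅s, t⁆ ∈ C) :
    ∀ x ∈ Subgroup.closure S, ∀ y ∈ Subgroup.closure T, ⁅x, y⁆ ∈ C := by
  -- general step
  have gen : ∀ (S T : Set G), (∀ x ∈ Subgroup.closure S, ∀ c ∈ C, x * c = c * x) → 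
      (∀ s ∈ S, ∀ t ∈ T, ⁅s, t⁆ ∈ C) → ∀ x ∈ Subgroup.closure S, ∀ t ∈ T, ⁅x, t⁆ ∈ C := by
    intro S T hS h x hx t ht
    induction hx using Subgroup.closure_induction with
    | mem s hs => exact h s hs t ht
    | one => simp
    | mul a b ha hb iha ihb =>
      have : ⁅a * b, t⁆ = a * ⁅b, t⁆ * a⁻¹ * ⁅a, t⁆ := by
        simp only [commutatorElement_def]; group
      rw [this, hS a ha _ ihb, mul_inv_cancel_right]
      exact C.mul_mem ihb iha
    | inv a ha iha =>
      have : ⁅a⁻¹, t⁆ = a⁻¹ * ⁅a, t⁆⁻¹ * a := by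
        simp only [commutatorElement_def]; group
      rw [this, hS _ (Subgroup.inv_mem _ ha) _ (C.inv_mem iha), inv_mul_cancel_right]
      exact C.inv_mem iha
  have h1 := gen S T hS h
  intro x hx y hy
  have h2 := gen T (Subgroup.closure S : Set G) hT (by
    intro t ht s hs
    rw [← commutatorElement_inv]
    exact C.inv_mem (h1 s hs t ht)) y hy x hx
  rw [← commutatorElement_inv]
  exact C.inv_mem h2

theorem exp_closure {G : Type*} [Group G] (S : Set G) (m : ℕ)
    (h : ∀ s ∈ S, ∀ t ∈ S, s * t = t * s) (hm : ∀ s ∈ S, s ^ m = 1) :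
    ∀ x ∈ Subgroup.closure S, x ^ m = 1 := by
  have hc := comm_closure S S h
  intro x hx
  induction hx using Subgroup.closure_induction with
  | mem s hs => exact hm s hs
  | one => simp
  | mul a b ha hb iha ihb =>
    have : Commute a b := hc a ha b hb
    rw [this.mul_pow, iha, ihb, one_mul]
  | inv a ha iha => rw [inv_pow, iha, inv_one]

theorem comm_pow {G : Type*} [Group G] (x y c : G) (h : ⁅x, y⁆ = c) (hx : x * c = c * x)
    (hy : y * c = c * y) (a b : ℕ) : ⁅x ^ a, y ^ b⁆ = c ^ (a * b) := by
  have hxy : x * y = c * y * x := by rw [← h, commutatorElement_def]; group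
  have cx : Commute c x := hx.symm
  have cy : Commute c y := hy.symm
  have h1 : ∀ a : ℕ, x ^ a * y = c ^ a * y * x ^ a := by
    intro a
    induction a with
    | zero => simp
    | succ a ih =>
      have e1 : x * c ^ a = c ^ a * x := (cx.pow_left a).symm.eq
      rw [pow_succ', mul_assoc, ih, pow_succ']
      calc x * (c ^ a * y * x ^ a) = (x * c ^ a) * y * x ^ a := by group
        _ = c ^ a * (x * y) * x ^ a := by rw [e1]; group
        _ = c ^ a * (c * y * x) * x ^ a := by rw [hxy]
        _ = (c ^ a * c) * y * (x * x ^ a) := by group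
        _ = _ := by rw [← pow_succ, pow_succ']
  have h2 : ∀ b : ℕ, x ^ a * y ^ b = c ^ (a * b) * y ^ b * x ^ a := by
    intro b
    induction b with
    | zero => simp
    | succ b ih =>
      have e1 : y ^ b * c ^ a = c ^ a * y ^ b := ((cy.pow_left a).pow_right b).symm.eq
      calc x ^ a * y ^ (b + 1) = (x ^ a * y ^ b) * y := by rw [pow_succ]; group
        _ = c ^ (a * b) * y ^ b * (x ^ a * y) := by rw [ih]; group
        _ = c ^ (a * b) * (y ^ b * c ^ a) * y * x ^ a := by rw [h1]; group
        _ = (c ^ (a * b) * c ^ a) * (y ^ b * y) * x ^ a := by rw [e1]; group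
        _ = _ := by rw [← pow_add, ← pow_succ, mul_add, mul_one]
  rw [commutatorElement_def, h2]
  group

theorem heis_exp {G : Type*} [Group G] (A B C : Subgroup G) (m : ℕ)
    (hA : ∀ x ∈ A, x ^ m = 1) (hB : ∀ x ∈ B, x ^ m = 1) (hC : ∀ x ∈ C, x ^ m = 1)
    (hAC : ∀ x ∈ A, ∀ c ∈ C, x * c = c * x) (hBC : ∀ x ∈ B, ∀ c ∈ C, x * c = c * x)
    (hAB : ∀ x ∈ A, ∀ y ∈ B, ⁅x, y⁆ ∈ C) (hCC : ∀ x ∈ C, ∀ c ∈ C, x * c = c * x) :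
    ∀ x ∈ A ⊔ C ⊔ B, x ^ (m * m) = 1 := by
  have swap : ∀ a ∈ A, ∀ b ∈ B, ∃ c ∈ C, b * a = a * b * c := by
    intro a ha b hb
    refine ⟨⁅b⁻¹, a⁻¹⁆, ?_, ?_⟩
    · rw [← commutatorElement_inv]
      exact C.inv_mem (hAB _ (A.inv_mem ha) _ (B.inv_mem hb))
    · rw [commutatorElement_def]; group
  let D : Subgroup G :=
    { carrier := {x | ∃ a ∈ A, ∃ b ∈ B, ∃ c ∈ C, x = a * b * c}
      one_mem' := ⟨1, A.one_mem, 1, B.one_mem, 1, C.one_mem, by simp⟩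
      mul_mem' := by
        rintro _ _ ⟨a, ha, b, hb, c, hc, rfl⟩ ⟨a', ha', b', hb', c', hc', rfl⟩
        obtain ⟨d, hd, e⟩ := swap a' ha' b hb
        refine ⟨a * a', A.mul_mem ha ha', b * b', B.mul_mem hb hb', d * c * c',
          C.mul_mem (C.mul_mem hd hc) hc', ?_⟩
        calc a * b * c * (a' * b' * c') = a * b * (c * a') * b' * c' := by group
          _ = a * (b * a') * (c * b') * c' := by rw [← hAC a' ha' c hc]; group
          _ = a * a' * b * (d * (b' * c)) * c' := by rw [e, ← hBC b' hb' c hc]; group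
          _ = a * a' * b * ((b' * d) * c) * c' := by rw [hBC b' hb' d hd]; group
          _ = _ := by group
      inv_mem' := by
        rintro _ ⟨a, ha, b, hb, c, hc, rfl⟩
        obtain ⟨d, hd, e⟩ := swap a⁻¹ (A.inv_mem ha) b⁻¹ (B.inv_mem hb)
        refine ⟨a⁻¹, A.inv_mem ha, b⁻¹, B.inv_mem hb, d * c⁻¹, C.mul_mem hd (C.inv_mem hc), ?_⟩
        have hc' := C.inv_mem hc
        calc (a * b * c)⁻¹ = c⁻¹ * (b⁻¹ * a⁻¹) := by group
          _ = (c⁻¹ * a⁻¹) * b⁻¹ * d := by rw [e]; group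
          _ = a⁻¹ * (c⁻¹ * b⁻¹) * d := by rw [← hAC _ (A.inv_mem ha) _ hc']; group
          _ = a⁻¹ * b⁻¹ * (c⁻¹ * d) := by rw [← hBC _ (B.inv_mem hb) _ hc']; group
          _ = _ := by rw [hCC _ hc' _ hd] }
  have hD : A ⊔ C ⊔ B ≤ D := by
    refine sup_le (sup_le ?_ ?_) ?_
    · intro a ha; exact ⟨a, ha, 1, B.one_mem, 1, C.one_mem, by simp⟩
    · intro a ha; exact ⟨1, A.one_mem, 1, B.one_mem, a, ha, by simp⟩
    · intro a ha; exact ⟨1, A.one_mem, a, ha, 1, C.one_mem, by simp⟩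
  have hpow : ∀ a ∈ A, ∀ b ∈ B, ∀ c ∈ C, ∀ k : ℕ, ∃ c' ∈ C, (a * b * c) ^ k = a ^ k * b ^ k * c' := by
    intro a ha b hb c hc k
    induction k with
    | zero => exact ⟨1, C.one_mem, by simp⟩
    | succ k ih =>
      obtain ⟨c', hc', e⟩ := ih
      obtain ⟨d, hd, e2⟩ := swap a ha (b ^ k) (B.pow_mem hb k)
      refine ⟨d * c' * c, C.mul_mem (C.mul_mem hd hc') hc, ?_⟩
      calc (a * b * c) ^ (k + 1) = a ^ k * b ^ k * (c' * a) * b * c := by rw [pow_succ, e]; group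
        _ = a ^ k * (b ^ k * a) * (c' * b) * c := by rw [← hAC a ha c' hc']; group
        _ = a ^ k * a * b ^ k * (d * (b * c')) * c := by rw [e2, ← hBC b hb c' hc']; group
        _ = a ^ k * a * b ^ k * (b * d * c') * c := by rw [hBC b hb d hd]; group
        _ = _ := by rw [pow_succ, pow_succ]; group
  intro x hx
  obtain ⟨a, ha, b, hb, c, hc, rfl⟩ := hD hx
  obtain ⟨c', hc', e⟩ := hpow a ha b hb c hc m
  rw [pow_mul, e, hA a ha, hB b hb, one_mul, one_mul, hC c' hc']

/-- source and target blocks of the six roots -/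
def rs : ZMod 6 → Fin 3 := ![0, 0, 1, 1, 2, 2]
/-- target -/
def rt : ZMod 6 → Fin 3 := ![1, 2, 2, 0, 0, 1]

theorem root_adj : ∀ v : ZMod 6, rs v ≠ rt v ∧ rt v ≠ rs (v + 1) ∧ rs v ≠ rt (v + 1) := by decide
theorem root_opp : ∀ v : ZMod 6,
  (rt v = rs (v + 2) ∧ rs (v + 1) = rs v ∧ rt (v + 1) = rt (v + 2) ∧ rs v ≠ rt (v + 2)) ∨
  (rs v = rt (v + 2) ∧ rs (v + 1) = rs (v + 2) ∧ rt (v + 1) = rt v ∧ rt v ≠ rs (v + 2)) := by decide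
theorem root_all : ∀ a b : Fin 3, a ≠ b → ∃ v, rs v = a ∧ rt v = b := by decide

variable {G : Type*} [Group G]

theorem steinberg_vanish {n : ℕ} (hn : 3 ≤ n) (e : Fin n → Fin n → G)
    (h1 : ∀ i j k l, i ≠ j → k ≠ l → j ≠ k → i ≠ l → e i j * e k l = e k l * e i j)
    (h2 : ∀ i j k, i ≠ j → j ≠ k → i ≠ k → ⁅e i j, e j k⁆ = e i k)
    (Γ : Subgroup G) [Γ.FiniteIndex] (f : Γ →* Multiplicative ℝ) :
    ∀ γ : Γ, (γ : G) ∈ Subgroup.closure {x | ∃ i j, i ≠ j ∧ x = e i j} → f γ = 1 := by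
  classical
  -- exponent
  let Γ0 := Γ.normalCore
  let m := Γ0.index
  have hm0 : m ≠ 0 := Subgroup.FiniteIndex.index_ne_zero
  have hmem : ∀ x : G, x ^ m ∈ Γ0 := fun x => Subgroup.pow_index_mem Γ0 x
  have hle : Γ0 ≤ Γ := Subgroup.normalCore_le Γ
  have tf : ∀ (x : Multiplicative ℝ) (k : ℕ), k ≠ 0 → x ^ k = 1 → x = 1 := by
    intro x k hk hx
    have : k • x.toAdd = 0 := hx
    have : x.toAdd = 0 := by simpa [hk] using this
    exact this
  -- kernel
  let K : Subgroup G :=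
    { carrier := {x | x ∈ Γ0 ∧ ∀ g : G, ∀ h : g * x * g⁻¹ ∈ Γ, f ⟨g * x * g⁻¹, h⟩ = 1}
      one_mem' := by
        refine ⟨Γ0.one_mem, fun g h => ?_⟩
        have : (⟨g * 1 * g⁻¹, h⟩ : Γ) = 1 := by ext; simp
        rw [this, map_one]
      mul_mem' := by
        rintro a b ⟨ha, ha'⟩ ⟨hb, hb'⟩
        refine ⟨Γ0.mul_mem ha hb, fun g h => ?_⟩
        have ma : g * a * g⁻¹ ∈ Γ := hle (Subgroup.Normal.conj_mem inferInstance a ha g)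
        have mb : g * b * g⁻¹ ∈ Γ := hle (Subgroup.Normal.conj_mem inferInstance b hb g)
        have : (⟨g * (a * b) * g⁻¹, h⟩ : Γ) = ⟨_, ma⟩ * ⟨_, mb⟩ := by ext; simp
        rw [this, map_mul, ha' g ma, hb' g mb, one_mul]
      inv_mem' := by
        rintro a ⟨ha, ha'⟩
        refine ⟨Γ0.inv_mem ha, fun g h => ?_⟩
        have ma : g * a * g⁻¹ ∈ Γ := hle (Subgroup.Normal.conj_mem inferInstance a ha g)
        have : (⟨g * a⁻¹ * g⁻¹, h⟩ : Γ) = (⟨_, ma⟩)⁻¹ := by ext; simp [mul_assoc]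
        rw [this, map_inv, ha' g ma, inv_one] }
  have hKn : K.Normal := by
    constructor
    rintro a ⟨ha, ha'⟩ g
    refine ⟨Subgroup.Normal.conj_mem inferInstance a ha g, fun g' h => ?_⟩
    have e0 : g' * (g * a * g⁻¹) * g'⁻¹ = (g' * g) * a * (g' * g)⁻¹ := by group
    have := ha' (g' * g) (e0 ▸ h)
    rw [← this]; congr 2
  have third : ∀ i j : Fin n, ∃ k, i ≠ k ∧ k ≠ j := by
    intro i j
    have : ((Finset.univ : Finset (Fin n)) \ {i, j}).Nonempty := by
      rw [← Finset.card_pos]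
      have h := Finset.le_card_sdiff ({i, j} : Finset (Fin n)) Finset.univ
      have h' := Finset.card_le_two (a := i) (b := j)
      rw [Finset.card_univ, Fintype.card_fin] at h
      omega
    obtain ⟨k, hk⟩ := this
    simp at hk
    exact ⟨k, fun h => hk.1 h.symm, fun h => hk.2 h⟩
  have eK : ∀ i j, i ≠ j → (e i j) ^ m ∈ K := by
    intro i j hij
    refine ⟨hmem _, fun g h => ?_⟩
    obtain ⟨k, hik, hkj⟩ := third i j
    apply tf _ m hm0
    rw [← map_pow]
    have cp := comm_pow (e i k) (e k j) (e i j) (h2 i k j hik hkj hij)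
      (h1 i k i j hik hij hik.symm hij) (h1 k j i j hkj hij hij.symm hkj) m m
    have ma : g * (e i k) ^ m * g⁻¹ ∈ Γ := hle (Subgroup.Normal.conj_mem inferInstance _ (hmem _) g)
    have mb : g * (e k j) ^ m * g⁻¹ ∈ Γ := hle (Subgroup.Normal.conj_mem inferInstance _ (hmem _) g)
    have : (⟨g * (e i j) ^ m * g⁻¹, h⟩ : Γ) ^ m = ⁅(⟨_, ma⟩ : Γ), (⟨_, mb⟩ : Γ)⁆ := by
      ext
      have : g * (e i j) ^ (m * m) * g⁻¹ = ⁅g * (e i k) ^ m * g⁻¹, g * (e k j) ^ m * g⁻¹⁆ := by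
        rw [← cp]; simp only [commutatorElement_def]; group
      have e3 : (g * (e i j) ^ m * g⁻¹) ^ m = g * (e i j) ^ (m * m) * g⁻¹ := by
        rw [conj_pow, pow_mul]
      exact e3.trans this
    rw [this, map_commutatorElement]
    exact commutatorElement_eq_one_iff_mul_comm.mpr (mul_comm _ _)
  -- blocks
  let β : Fin n → Fin 3 := fun i => if i.1 = 0 then 0 else if i.1 = 1 then 1 else 2
  have hβ : ∀ a : Fin 3, ∃ k, β k = a := by
    intro a
    fin_cases a
    · exact ⟨⟨0, by omega⟩, by simp [β]⟩
    · exact ⟨⟨1, by omega⟩, by simp [β]⟩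
    · exact ⟨⟨2, by omega⟩, by simp [β]⟩
  let S : ZMod 6 → Set G := fun v => {x | ∃ i j, β i = rs v ∧ β j = rt v ∧ x = e i j}
  let X : ZMod 6 → Subgroup G := fun v => Subgroup.closure (S v)
  have ne : ∀ {i j : Fin n}, β i ≠ β j → i ≠ j := fun h h' => h (by rw [h'])
  have hself : ∀ v, ∀ s ∈ S v, ∀ t ∈ S v, s * t = t * s := by
    rintro v _ ⟨i, j, hi, hj, rfl⟩ _ ⟨k, l, hk, hl, rfl⟩
    have r := root_adj v
    exact h1 i j k l (ne (by rw [hi, hj]; exact r.1)) (ne (by rw [hk, hl]; exact r.1))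
      (ne (by rw [hj, hk]; exact r.1.symm)) (ne (by rw [hi, hl]; exact r.1))
  have hadj : ∀ v, ∀ s ∈ S v, ∀ t ∈ S (v + 1), s * t = t * s := by
    rintro v _ ⟨i, j, hi, hj, rfl⟩ _ ⟨k, l, hk, hl, rfl⟩
    have r := root_adj v
    have r' := root_adj (v + 1)
    exact h1 i j k l (ne (by rw [hi, hj]; exact r.1)) (ne (by rw [hk, hl]; exact r'.1))
      (ne (by rw [hj, hk]; exact r.2.1)) (ne (by rw [hi, hl]; exact r.2.2))
  have add12 : ∀ v : ZMod 6, v + 1 + 1 = v + 2 := fun v => by rw [add_assoc]; rfl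
  have hc : ∀ v, ∀ x ∈ X v, ∀ y ∈ X (v + 1), x * y = y * x := fun v =>
    comm_closure _ _ (hadj v)
  have hc' : ∀ v, ∀ x ∈ X (v + 2), ∀ y ∈ X (v + 1), x * y = y * x := by
    intro v x hx y hy
    rw [← add12] at hx
    exact (hc (v + 1) y hy x hx).symm
  have hopp : ∀ v, ∀ s ∈ S v, ∀ t ∈ S (v + 2), ⁅s, t⁆ ∈ X (v + 1) := by
    rintro v _ ⟨i, j, hi, hj, rfl⟩ _ ⟨k, l, hk, hl, rfl⟩
    have r0 := (root_adj v).1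
    have r2 := (root_adj (v + 2)).1
    have hij : i ≠ j := ne (by rw [hi, hj]; exact r0)
    have hkl : k ≠ l := ne (by rw [hk, hl]; exact r2)
    rcases root_opp v with ⟨ra, rb, rc, rd⟩ | ⟨ra, rb, rc, rd⟩
    · have hil : i ≠ l := ne (by rw [hi, hl]; exact rd)
      by_cases hjk : j = k
      · subst hjk
        rw [h2 i j l hij hkl hil]
        exact Subgroup.subset_closure ⟨i, l, by rw [hi, rb], by rw [hl, rc], rfl⟩
      · rw [commutatorElement_eq_one_iff_mul_comm.mpr (h1 i j k l hij hkl hjk hil)]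
        exact Subgroup.one_mem _
    · have hjk : j ≠ k := ne (by rw [hj, hk]; exact rd)
      by_cases hil : i = l
      · subst hil
        rw [← commutatorElement_inv, h2 k i j hkl hij hjk.symm]
        exact Subgroup.inv_mem _ (Subgroup.subset_closure ⟨k, j, by rw [hk, rb], by rw [hj, rc], rfl⟩)
      · rw [commutatorElement_eq_one_iff_mul_comm.mpr (h1 i j k l hij hkl hjk hil)]
        exact Subgroup.one_mem _
  have hc2 : ∀ v, ∀ x ∈ X v, ∀ y ∈ X (v + 2), ⁅x, y⁆ ∈ X (v + 1) := fun v =>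
    commutator_closure _ _ _ (hc v) (hc' v) (hopp v)
  have commem : ∀ (H : Subgroup G) (x y : G), x ∈ H → y ∈ H → ⁅x, y⁆ ∈ H := by
    intro H x y hx hy
    rw [commutatorElement_def]
    exact H.mul_mem (H.mul_mem (H.mul_mem hx hy) (H.inv_mem hx)) (H.inv_mem hy)
  have hg : ∀ v, X (v + 1) ≤ X v ⊔ X (v + 2) := by
    intro v
    rw [Subgroup.closure_le]
    rintro _ ⟨i, j, hi, hj, rfl⟩
    have r0 := (root_adj v).1
    have r1 := (root_adj (v + 1)).1
    have r2 := (root_adj (v + 2)).1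
    have hij : i ≠ j := ne (by rw [hi, hj]; exact r1)
    rcases root_opp v with ⟨ra, rb, rc, rd⟩ | ⟨ra, rb, rc, rd⟩
    · obtain ⟨k, hk⟩ := hβ (rt v)
      have hik : i ≠ k := ne (by rw [hi, hk, rb]; exact r0)
      have hkj : k ≠ j := ne (by rw [hk, hj, rc, ra]; exact r2)
      rw [SetLike.mem_coe, ← h2 i k j hik hkj hij]
      exact commem _ _ _
        (Subgroup.mem_sup_left (Subgroup.subset_closure ⟨i, k, by rw [hi, rb], hk, rfl⟩))
        (Subgroup.mem_sup_right (Subgroup.subset_closure ⟨k, j, by rw [hk, ra], by rw [hj, rc], rfl⟩))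
    · obtain ⟨k, hk⟩ := hβ (rs v)
      have hik : i ≠ k := ne (by rw [hi, hk, rb, ra]; exact r2)
      have hkj : k ≠ j := ne (by rw [hk, hj, rc]; exact r0)
      rw [SetLike.mem_coe, ← h2 i k j hik hkj hij]
      exact commem _ _ _
        (Subgroup.mem_sup_right (Subgroup.subset_closure ⟨i, k, by rw [hi, rb], by rw [hk, ra], rfl⟩))
        (Subgroup.mem_sup_left (Subgroup.subset_closure ⟨k, j, hk, by rw [hj, rc], rfl⟩))
  have hself' : ∀ v, ∀ x ∈ X v, ∀ y ∈ X v, x * y = y * x := fun v => comm_closure _ _ (hself v)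
  -- torsion
  have hSne : ∀ v, ∀ s ∈ S v, s ^ m ∈ K := by
    rintro v _ ⟨i, j, hi, hj, rfl⟩
    exact eK i j (ne (by rw [hi, hj]; exact (root_adj v).1))
  let π := QuotientGroup.mk' K
  have hexp : ∀ v, ∀ x ∈ (X v).map π, x ^ m = 1 := by
    intro v x hx
    have e0 : (X v).map π = Subgroup.closure (π '' S v) := MonoidHom.map_closure _ _
    rw [e0] at hx
    refine exp_closure _ m ?_ ?_ x hx
    · rintro _ ⟨s, hs, rfl⟩ _ ⟨t, ht, rfl⟩
      rw [← map_mul, hself v s hs t ht, map_mul]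
    · rintro _ ⟨s, hs, rfl⟩
      rw [← map_pow]
      exact (QuotientGroup.eq_one_iff _).mpr (hSne v s hs)
  have htor : ∀ v, ∀ x ∈ X v ⊔ X (v + 1) ⊔ X (v + 2), x ^ (m * m) ∈ K := by
    intro v x hx
    have := heis_exp ((X v).map π) ((X (v + 2)).map π) ((X (v + 1)).map π) m (hexp _) (hexp _) (hexp _)
      (by
        rintro _ ⟨s, hs, rfl⟩ _ ⟨t, ht, rfl⟩
        rw [← map_mul, hc v s hs t ht, map_mul])
      (by
        rintro _ ⟨s, hs, rfl⟩ _ ⟨t, ht, rfl⟩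
        rw [← map_mul, hc' v s hs t ht, map_mul])
      (by
        rintro _ ⟨s, hs, rfl⟩ _ ⟨t, ht, rfl⟩
        rw [← map_commutatorElement]
        exact ⟨_, hc2 v s hs t ht, rfl⟩)
      (by
        rintro _ ⟨s, hs, rfl⟩ _ ⟨t, ht, rfl⟩
        rw [← map_mul, hself' _ s hs t ht, map_mul])
      (π x) (by
        rw [← Subgroup.map_sup, ← Subgroup.map_sup]
        exact ⟨x, hx, rfl⟩)
    rw [← map_pow] at this
    exact (QuotientGroup.eq_one_iff _).mp this
  have hf : ∀ v, ∀ (g : G) (γ : Γ), g * γ * g⁻¹ ∈ X v ⊔ X (v + 1) ⊔ X (v + 2) → f γ = 1 := by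
    intro v g γ hγ
    have hk := htor v _ hγ
    apply tf _ (m * m) (mul_ne_zero hm0 hm0)
    have e0 : g⁻¹ * (g * (γ : G) * g⁻¹) ^ (m * m) * g⁻¹⁻¹ = ((γ ^ (m * m) : Γ) : G) := by
      rw [conj_pow]; push_cast; group
    have := hk.2 g⁻¹ (by rw [e0]; exact (γ ^ (m * m)).2)
    rw [← map_pow, ← this]
    congr 1
    ext
    exact e0.symm
  haveI : Fintype (G ⧸ Γ) := Fintype.ofFinite _
  have main := hexagon_group Γ f X hc hc2 hg hf
  intro γ hγ
  apply main γ
  have hX : ∀ i j, β i ≠ β j → e i j ∈ ⨆ v, X v := by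
    intro i j hij
    obtain ⟨v, hv1, hv2⟩ := root_all _ _ hij
    exact Subgroup.mem_iSup_of_mem v (Subgroup.subset_closure ⟨i, j, hv1.symm, hv2.symm, rfl⟩)
  have : Subgroup.closure {x | ∃ i j, i ≠ j ∧ x = e i j} ≤ ⨆ v, X v := by
    rw [Subgroup.closure_le]
    rintro _ ⟨i, j, hij, rfl⟩
    by_cases hb : β i = β j
    · have : ∃ a : Fin 3, a ≠ β i := by
        generalize β i = b
        revert b; decide
      obtain ⟨a, ha⟩ := this
      obtain ⟨k, hk⟩ := hβ a
      have q1 : β i ≠ β k := by rw [hk]; exact ha.symm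
      have q2 : β k ≠ β j := by rw [hk, ← hb]; exact ha
      rw [SetLike.mem_coe, ← h2 i k j (ne q1) (ne q2) hij]
      exact commem _ _ _ (hX _ _ q1) (hX _ _ q2)
    · exact hX i j hb
  exact this hγ

end steinberg
end EH
end


noncomputable section
namespace EH
section killM
open scoped commutatorElement

theorem kill_M {G : Type*} [Group G] (I : Subgroup G) [I.Normal] (Γ : Subgroup G) [Γ.FiniteIndex]
    (h : ⁅I, I⁆ ≤ ⁅Γ, Γ⁆) (f : Γ →* Multiplicative ℝ) (S : Set G)
    (hS : ∀ k ∈ S, k ∈ I ∧ ∃ k' ∈ I, ∃ R : G, ∀ t : ℕ, R ^ t * k' * (R ^ t)⁻¹ = k' * k ^ t) :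
    ∀ γ : Γ, (γ : G) ∈ Subgroup.normalClosure S → f γ = 1 := by
  classical
  let Γ0 := Γ.normalCore
  let m := Γ0.index
  have hm : m ≠ 0 := Subgroup.FiniteIndex.index_ne_zero
  have pw : ∀ x : G, x ^ m ∈ Γ := fun x => Γ.normalCore_le (Subgroup.pow_index_mem Γ0 x)
  have hker : ∀ c ∈ ⁅Γ, Γ⁆, ∀ hc : c ∈ Γ, f ⟨c, hc⟩ = 1 := by
    have : ⁅Γ, Γ⁆ ≤ f.ker.map Γ.subtype := by
      rw [Subgroup.commutator_le]
      intro a ha b hb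
      refine ⟨⁅(⟨a, ha⟩ : Γ), (⟨b, hb⟩ : Γ)⁆, ?_, rfl⟩
      change f _ = 1
      rw [map_commutatorElement, commutatorElement_eq_one_iff_mul_comm, mul_comm]
    intro c hc hc'
    obtain ⟨d, hd, e⟩ := this hc
    have : (⟨c, hc'⟩ : Γ) = d := Subtype.ext e.symm
    rw [this]; exact hd
  let g : G → Multiplicative ℝ := fun x => f ⟨x ^ m, pw x⟩
  have gmul : ∀ x ∈ I, ∀ y ∈ I, g (x * y) = g x * g y := by
    intro x hx y hy
    have hc : x ^ m * y ^ m * ((x * y) ^ m)⁻¹ ∈ ⁅I, I⁆ := by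
      rw [← QuotientGroup.eq_one_iff]
      have hcomm : Commute (x : G ⧸ ⁅I, I⁆) (y : G ⧸ ⁅I, I⁆) := by
        change _ = _
        rw [← commutatorElement_eq_one_iff_mul_comm]
        exact (QuotientGroup.eq_one_iff ⁅x, y⁆).2 (Subgroup.commutator_mem_commutator hx hy)
      simp only [QuotientGroup.mk_mul, QuotientGroup.mk_pow, QuotientGroup.mk_inv, hcomm.mul_pow]
      group
    have hcΓ : x ^ m * y ^ m * ((x * y) ^ m)⁻¹ ∈ Γ := Γ.mul_mem (Γ.mul_mem (pw x) (pw y)) (Γ.inv_mem (pw _))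
    have := hker _ (h hc) hcΓ
    have e : (⟨x ^ m * y ^ m * ((x * y) ^ m)⁻¹, hcΓ⟩ : Γ) = ⟨x ^ m, pw x⟩ * ⟨y ^ m, pw y⟩ * (⟨(x * y) ^ m, pw _⟩)⁻¹ := rfl
    rw [e, map_mul, map_mul, map_inv, mul_inv_eq_one] at this
    exact this.symm
  have gconj : ∀ γ ∈ Γ, ∀ x, g (γ * x * γ⁻¹) = g x := by
    intro γ hγ x
    have e : (⟨(γ * x * γ⁻¹) ^ m, pw _⟩ : Γ) = ⟨γ, hγ⟩ * ⟨x ^ m, pw x⟩ * (⟨γ, hγ⟩)⁻¹ :=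
      Subtype.ext (by simp)
    change f _ = f _
    rw [e, map_mul, map_mul, map_inv, mul_comm (f ⟨γ, hγ⟩), mul_inv_cancel_right]
  have gpow : ∀ x, ∀ k : ℕ, g (x ^ k) = g x ^ k := by
    intro x k
    have e : (⟨(x ^ k) ^ m, pw _⟩ : Γ) = ⟨x ^ m, pw x⟩ ^ k :=
      Subtype.ext (by simp [← pow_mul, mul_comm])
    change f _ = f _ ^ k
    rw [e, map_pow]
  have tf : ∀ x : Multiplicative ℝ, x ^ m = 1 → x = 1 := by
    intro x hx
    have : m • (Multiplicative.toAdd x) = 0 := by rw [← toAdd_pow, hx]; rfl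
    rw [smul_eq_zero] at this
    rcases this with h | h
    · exact absurd h hm
    · exact h
  have gS : ∀ k ∈ S, ∀ z : G, g (z * k * z⁻¹) = 1 := by
    intro k hk z
    obtain ⟨hkI, k', hk', R, hR⟩ := hS k hk
    have hy : z * k' * z⁻¹ ∈ I := Subgroup.Normal.conj_mem ‹_› _ hk' z
    have hz : z * k * z⁻¹ ∈ I := Subgroup.Normal.conj_mem ‹_› _ hkI z
    have h1 := gconj _ (pw (z * R * z⁻¹)) (z * k' * z⁻¹)
    have e : (z * R * z⁻¹) ^ m * (z * k' * z⁻¹) * ((z * R * z⁻¹) ^ m)⁻¹ = (z * k' * z⁻¹) * (z * k * z⁻¹) ^ m := by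
      have := hR m
      calc _ = z * (R ^ m * k' * (R ^ m)⁻¹) * z⁻¹ := by simp; group
        _ = z * (k' * k ^ m) * z⁻¹ := by rw [this]
        _ = _ := by simp
    rw [e, gmul _ hy _ (I.pow_mem hz m), gpow, mul_eq_left] at h1
    exact tf _ h1
  have hM : ∀ x ∈ Subgroup.normalClosure S, x ∈ I ∧ g x = 1 := by
    intro x hx
    have g1 : g 1 = 1 := by
      have := gmul 1 I.one_mem 1 I.one_mem
      rw [mul_one] at this
      exact (mul_eq_left.1 this.symm)
    refine Subgroup.closure_induction ?_ ?_ ?_ ?_ hx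
    · intro x hx
      rw [Group.mem_conjugatesOfSet_iff] at hx
      obtain ⟨k, hk, hc⟩ := hx
      obtain ⟨z, rfl⟩ := isConj_iff.1 hc
      exact ⟨Subgroup.Normal.conj_mem ‹_› _ (hS k hk).1 z, gS k hk z⟩
    · exact ⟨I.one_mem, g1⟩
    · rintro x y _ _ ⟨hx, hx'⟩ ⟨hy, hy'⟩
      exact ⟨I.mul_mem hx hy, by rw [gmul x hx y hy, hx', hy', one_mul]⟩
    · rintro x _ ⟨hx, hx'⟩
      refine ⟨I.inv_mem hx, ?_⟩
      have := gmul x hx x⁻¹ (I.inv_mem hx)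
      rw [mul_inv_cancel, g1, hx', one_mul] at this
      exact this.symm
  intro γ hγ
  have := (hM γ hγ).2
  apply tf
  rw [← map_pow]
  exact this

end killM

section trans
variable {n : ℕ}

abbrev F (n : ℕ) := FreeGroup (Fin n)

def S (i : Fin n) : Subgroup (F n) := Subgroup.closure {x | ∃ k, k ≠ i ∧ x = FreeGroup.of k}

theorem of_mem_S {i k : Fin n} (h : k ≠ i) : (FreeGroup.of k : F n) ∈ S i :=
  Subgroup.subset_closure ⟨k, h, rfl⟩

def E (i : Fin n) (l r : F n) : F n →* F n :=
  FreeGroup.lift (fun k => if k = i then l * FreeGroup.of i * r else FreeGroup.of k)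

theorem E_self (i : Fin n) (l r : F n) : E i l r (FreeGroup.of i) = l * FreeGroup.of i * r := by
  simp [E]

theorem E_ne {i k : Fin n} (h : k ≠ i) (l r : F n) : E i l r (FreeGroup.of k) = FreeGroup.of k := by
  simp [E, h]

theorem E_mem {i : Fin n} (l r : F n) {s : F n} (hs : s ∈ S i) : E i l r s = s := by
  have : S i ≤ (E i l r).eqLocus (MonoidHom.id _) := by
    rw [S, Subgroup.closure_le]
    rintro _ ⟨k, hk, rfl⟩
    exact E_ne hk l r
  exact this hs

theorem E_comp (i : Fin n) (l r l' r' : F n) (hl' : l' ∈ S i) (hr' : r' ∈ S i) :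
    (E i l r).comp (E i l' r') = E i (l' * l) (r * r') := by
  apply FreeGroup.ext_hom
  intro k
  by_cases hk : k = i
  · subst hk
    simp only [MonoidHom.comp_apply, E_self, map_mul, E_mem l r hl', E_mem l r hr']
    group
  · simp only [MonoidHom.comp_apply, E_ne hk]

theorem E_one (i : Fin n) : E i 1 1 = MonoidHom.id (F n) := by
  apply FreeGroup.ext_hom
  intro k
  by_cases hk : k = i
  · subst hk; simp [E_self]
  · simp [E_ne hk]

def A (i : Fin n) (l r : S i) : MulAut (F n) :=
  MonoidHom.toMulEquiv (E i l r) (E i (l : F n)⁻¹ (r : F n)⁻¹)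
    (by rw [E_comp _ _ _ _ _ l.2 r.2, mul_inv_cancel, inv_mul_cancel, E_one])
    (by rw [E_comp _ _ _ _ _ (inv_mem l.2) (inv_mem r.2), inv_mul_cancel, mul_inv_cancel, E_one])

theorem A_apply (i : Fin n) (l r : S i) (x : F n) : A i l r x = E i l r x := rfl

theorem A_self (i : Fin n) (l r : S i) : A i l r (FreeGroup.of i) = l * FreeGroup.of i * r := E_self _ _ _

theorem A_ne {i k : Fin n} (h : k ≠ i) (l r : S i) : A i l r (FreeGroup.of k) = FreeGroup.of k := E_ne h _ _

theorem A_mem {i : Fin n} (l r : S i) {s : F n} (hs : s ∈ S i) : A i l r s = s := E_mem _ _ hs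

theorem aut_ext {φ ψ : MulAut (F n)} (h : ∀ k, φ (FreeGroup.of k) = ψ (FreeGroup.of k)) : φ = ψ := by
  have : φ.toMonoidHom = ψ.toMonoidHom := FreeGroup.ext_hom _ _ h
  ext x
  exact DFunLike.congr_fun this x

theorem A_mul (i : Fin n) (l r l' r' : S i) : A i l r * A i l' r' = A i (l' * l) (r * r') := by
  ext x
  exact DFunLike.congr_fun (E_comp i l r l' r' l'.2 r'.2) x

theorem A_one (i : Fin n) : A i 1 1 = 1 := by
  ext x
  exact DFunLike.congr_fun (E_one i) x

theorem A_inv (i : Fin n) (l r : S i) : (A i l r)⁻¹ = A i l⁻¹ r⁻¹ := by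
  rw [inv_eq_iff_mul_eq_one, A_mul, inv_mul_cancel, mul_inv_cancel, A_one]

theorem A_pow (i : Fin n) (l r : S i) (t : ℕ) : (A i l r) ^ t = A i (l ^ t) (r ^ t) := by
  induction t with
  | zero => simp [A_one]
  | succ t ih => rw [pow_succ, ih, A_mul, ← pow_succ', ← pow_succ]

theorem A_conj (φ : MulAut (F n)) (j : Fin n) (hj : φ (FreeGroup.of j) = FreeGroup.of j)
    (hS : ∀ k, k ≠ j → φ (FreeGroup.of k) ∈ S j) (l r l' r' : S j) (hl : (l' : F n) = φ l)
    (hr : (r' : F n) = φ r) : φ * A j l r = A j l' r' * φ := by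
  apply aut_ext
  intro k
  by_cases hk : k = j
  · subst hk
    simp only [MulAut.mul_apply, A_self, map_mul, hj, hl, hr]
  · simp only [MulAut.mul_apply, A_ne hk, A_mem _ _ (hS k hk)]

def X (i j : Fin n) : S i := if h : j ≠ i then ⟨FreeGroup.of j, of_mem_S h⟩ else 1

theorem X_val {i j : Fin n} (h : j ≠ i) : (X i j : F n) = FreeGroup.of j := by
  simp [X, h]

def R (i j : Fin n) : MulAut (F n) := A i 1 (X i j)
def L (i j : Fin n) : MulAut (F n) := A i (X i j) 1
def K (i j : Fin n) : MulAut (F n) := A i (X i j)⁻¹ (X i j)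

theorem K_eq (i j : Fin n) : K i j = (L i j)⁻¹ * R i j := by
  rw [K, L, R, A_inv, A_mul, one_mul, inv_one, one_mul]

theorem R_L_comm (i j k : Fin n) : R i j * L i k = L i k * R i j := by
  rw [R, L, A_mul, A_mul]; simp

/-- conjugation by transvections on another letter -/
theorem A_conj' {i j : Fin n} (hij : i ≠ j) (a b : S i) (ha : (a : F n) ∈ S j) (hb : (b : F n) ∈ S j)
    (l r l' r' : S j) (hl : (l' : F n) = A i a b l) (hr : (r' : F n) = A i a b r) :
    A i a b * A j l r = A j l' r' * A i a b := by
  apply A_conj _ _ (A_ne hij.symm _ _) _ _ _ _ _ hl hr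
  intro k hk
  by_cases hki : k = i
  · subst hki; rw [A_self]; exact mul_mem (mul_mem ha (of_mem_S hk)) hb
  · rw [A_ne hki]; exact of_mem_S hk

theorem R_comm {i j k l : Fin n} (hik : i ≠ k) (hji : j ≠ i) (hlk : l ≠ k) (hjk : j ≠ k) (hli : l ≠ i) :
    R i j * R k l = R k l * R i j := by
  apply A_conj' hik
  · exact one_mem _
  · rw [X_val hji]; exact of_mem_S hjk
  · simp
  · rw [X_val hlk, A_ne hli]

/-- `R_ji R_kj = R_kj R_ki R_ji`. -/
theorem R_conj {i j k : Fin n} (hij : i ≠ j) (hjk : j ≠ k) (hik : i ≠ k) :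
    R j i * R k j = R k j * R k i * R j i := by
  rw [R, R, R, A_mul]
  apply A_conj' hjk
  · exact one_mem _
  · rw [X_val hij]; exact of_mem_S hik
  · simp
  · rw [X_val hjk, A_self, Subgroup.coe_mul, X_val hjk, X_val hik, X_val hij]; simp

theorem K_conj {i j k : Fin n} (hij : i ≠ j) (hjk : j ≠ k) (hik : i ≠ k) (t : ℕ) :
    R i k ^ t * K j i * (R i k ^ t)⁻¹ = K j i * K j k ^ t := by
  rw [mul_inv_eq_iff_eq_mul]
  rw [R, K, K, A_pow, A_pow, A_mul]
  apply A_conj' hij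
  · simp
  · rw [Subgroup.coe_pow, X_val hik.symm]; exact pow_mem (of_mem_S hjk.symm) _
  · simp [X_val hij, X_val hjk.symm, X_val hik.symm, A_self]
  · simp [X_val hij, X_val hjk.symm, X_val hik.symm, A_self]

theorem exists_third (hn : 3 ≤ n) (i j : Fin n) : ∃ k, k ≠ i ∧ k ≠ j := by
  have : ∃ k, k ∉ ({i, j} : Finset (Fin n)) := by
    by_contra hc
    push Not at hc
    have h1 : (Finset.univ : Finset (Fin n)) ⊆ {i, j} := fun k _ => hc k
    have := Finset.card_le_card h1
    have h2 := Finset.card_le_two (a := i) (b := j)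
    simp at this
    omega
  obtain ⟨k, hk⟩ := this
  simp at hk
  exact ⟨k, hk.1, hk.2⟩

end trans
end EH
end


noncomputable section
namespace EH
section vanish
open scoped commutatorElement
variable {n : ℕ}

def NN (n : ℕ) : Subgroup (MulAut (F n)) :=
  Subgroup.closure {x | ∃ i j, i ≠ j ∧ (x = R i j ∨ x = L i j)}

theorem N_vanish (hn : 3 ≤ n) (I : Subgroup (MulAut (F n))) [I.Normal]
    (hK : ∀ i j, i ≠ j → K i j ∈ I) (Γ : Subgroup (MulAut (F n))) [Γ.FiniteIndex]
    (h : ⁅I, I⁆ ≤ ⁅Γ, Γ⁆) (f : Γ →* Multiplicative ℝ) :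
    ∀ γ : Γ, (γ : MulAut (F n)) ∈ NN n → f γ = 1 := by
  classical
  let M : Subgroup (MulAut (F n)) := Subgroup.normalClosure {x | ∃ i j, i ≠ j ∧ x = K i j}
  have hM : ∀ γ : Γ, (γ : MulAut (F n)) ∈ M → f γ = 1 := by
    apply kill_M I Γ h f
    rintro _ ⟨j, k, hjk, rfl⟩
    obtain ⟨i, hij, hik⟩ := exists_third hn j k
    exact ⟨hK _ _ hjk, K j i, hK _ _ hij.symm, R i k, fun t => K_conj hij hjk hik t⟩
  have hMn : M.Normal := Subgroup.normalClosure_normal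
  let π := QuotientGroup.mk' M
  have hπ : Function.Surjective π := QuotientGroup.mk'_surjective M
  have : (Γ.map π).FiniteIndex := ⟨fun h0 => by
    have := Subgroup.index_map_dvd Γ hπ
    rw [h0, zero_dvd_iff] at this
    exact Subgroup.FiniteIndex.index_ne_zero this⟩
  let q := π.subgroupMap Γ
  have hq : Function.Surjective q := π.subgroupMap_surjective Γ
  have hker : q.ker ≤ f.ker := by
    intro γ hγ
    apply hM
    have : π γ = 1 := congrArg Subtype.val hγ
    exact (QuotientGroup.eq_one_iff _).1 this
  let fb : Γ.map π →* Multiplicative ℝ := q.liftOfSurjective hq ⟨f, hker⟩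
  have hfb : ∀ γ, fb (q γ) = f γ := fun γ => MonoidHom.liftOfRightInverse_comp_apply q _ _ ⟨f, hker⟩ γ
  have hLR : ∀ i j, i ≠ j → π (L i j) = π (R i j) := by
    intro i j hij
    have : π (K i j) = 1 := (QuotientGroup.eq_one_iff _).2 (Subgroup.subset_normalClosure ⟨i, j, hij, rfl⟩)
    rw [K_eq, map_mul, map_inv, inv_mul_eq_one] at this
    exact this
  have same : ∀ i j k, j ≠ i → k ≠ i → π (R i j) * π (R i k) = π (R i k) * π (R i j) := by
    intro i j k hj hk
    rw [← hLR i k hk.symm, ← map_mul, R_L_comm, map_mul]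
  have key := steinberg_vanish hn (fun i j => π (R j i)) ?_ ?_ (Γ.map π) fb
  · intro γ hγ
    rw [← hfb]
    apply key
    change π γ ∈ _
    have : NN n ≤ (Subgroup.closure {x | ∃ i j, i ≠ j ∧ x = π (R j i)}).comap π := by
      rw [NN, Subgroup.closure_le]
      rintro _ ⟨i, j, hij, rfl | rfl⟩
      · exact Subgroup.subset_closure ⟨j, i, hij.symm, rfl⟩
      · refine Subgroup.subset_closure ⟨j, i, hij.symm, hLR i j hij⟩
    exact this hγ
  · intro i j k l hij hkl hjk hil
    change π (R j i) * π (R l k) = π (R l k) * π (R j i)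
    by_cases hjl : j = l
    · subst hjl
      exact same j i k hij hkl
    · rw [← map_mul, R_comm hjl hij hkl hil hjk.symm, map_mul]
  · intro i j k hij hjk hik
    change ⁅π (R j i), π (R k j)⁆ = π (R k i)
    rw [commutatorElement_def, ← map_mul, R_conj hij hjk hik, map_mul, map_mul, same k j i hjk hik]
    group

/-- a finite index subgroup on which a real character vanishes -/
theorem vanish_of_finite_index {G : Type*} [Group G] (Γ N : Subgroup G) [N.FiniteIndex]
    (f : Γ →* Multiplicative ℝ) (h : ∀ γ : Γ, (γ : G) ∈ N → f γ = 1) : f = 1 := by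
  ext γ
  let m := N.normalCore.index
  have hm : m ≠ 0 := Subgroup.FiniteIndex.index_ne_zero
  have h1 : f (γ ^ m) = 1 := h _ (N.normalCore_le (Subgroup.pow_index_mem N.normalCore (γ : G)))
  rw [map_pow] at h1
  have : m • (Multiplicative.toAdd (f γ)) = 0 := by rw [← toAdd_pow, h1]; rfl
  rw [smul_eq_zero] at this
  rcases this with h | h
  · exact absurd h hm
  · exact h

/-- f.g. group without real characters has finite abelianization -/
theorem finite_ab {G : Type*} [Group G] [Group.FG G] (h : ∀ φ : G →* Multiplicative ℝ, φ = 1) :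
    Finite (Abelianization G) := by
  have : Group.FG (Abelianization G) := Group.fg_of_surjective (f := Abelianization.of) (QuotientGroup.mk'_surjective _)
  have : AddGroup.FG (Additive (Abelianization G)) := inferInstance
  obtain ⟨r, ι, hι, p, hp, e, ⟨g⟩⟩ := AddCommGroup.equiv_free_prod_directSum_zmod (Additive (Abelianization G))
  have hpos : ∀ i, NeZero (p i ^ e i) := fun i => ⟨pow_ne_zero _ (hp i).ne_zero⟩
  have hr : r = 0 := by
    by_contra hr
    let i : Fin r := ⟨0, Nat.pos_of_ne_zero hr⟩
    let ψ : Additive (Abelianization G) →+ ℝ :=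
      (((Int.castAddHom ℝ).comp (Finsupp.applyAddHom i)).comp (AddMonoidHom.fst _ _)).comp g.toAddMonoidHom
    let φ : G →* Multiplicative ℝ := (AddMonoidHom.toMultiplicativeRight ψ).comp Abelianization.of
    have hφ := h φ
    obtain ⟨x, hx⟩ := QuotientGroup.mk'_surjective _ (Additive.toMul (g.symm (Finsupp.single i 1, 0)))
    have h1 : ψ (g.symm (Finsupp.single i 1, 0)) = 1 := by
      simp [ψ]
    have h2 : φ x = 1 := by rw [hφ]; rfl
    have h3 : ψ (g.symm (Finsupp.single i 1, 0)) = 0 := by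
      have : Multiplicative.toAdd (φ x) = ψ (Additive.ofMul (QuotientGroup.mk' _ x)) := rfl
      rw [hx] at this
      rw [h2] at this
      exact this.symm
    rw [h1] at h3
    exact one_ne_zero h3
  subst hr
  have : ∀ i, Finite (ZMod (p i ^ e i)) := fun i => inferInstance
  have hf : Finite (DirectSum ι fun i => ZMod (p i ^ e i)) := by
    classical
    exact Finite.of_equiv _ (DirectSum.addEquivProd (fun i => ZMod (p i ^ e i))).symm.toEquiv
  have : Finite (Additive (Abelianization G)) := Finite.of_equiv _ g.symm.toEquiv
  exact this

end vanish
end EH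
end


noncomputable section
namespace EH
section words

def lcp {α : Type*} [DecidableEq α] : List α → List α → ℕ
  | [], _ => 0
  | _ :: _, [] => 0
  | a :: l, b :: m => if a = b then lcp l m + 1 else 0

theorem lcp_spec {α : Type*} [DecidableEq α] (l m : List α) :
    ∃ p a b, l = p ++ a ∧ m = p ++ b ∧ p.length = lcp l m ∧ (∀ x ∈ a.head?, ∀ y ∈ b.head?, x ≠ y) := by
  induction l generalizing m with
  | nil => exact ⟨[], [], m, rfl, rfl, by simp [lcp], by simp⟩
  | cons x l ih =>
    cases m with
    | nil => exact ⟨[], x :: l, [], rfl, rfl, by simp [lcp], by simp⟩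
    | cons y m =>
      by_cases h : x = y
      · subst h
        obtain ⟨p, a, b, rfl, rfl, h1, h2⟩ := ih m
        exact ⟨x :: p, a, b, rfl, rfl, by simp [lcp, h1], h2⟩
      · exact ⟨[], x :: l, y :: m, rfl, rfl, by simp [lcp, h], by simpa using h⟩

theorem le_lcp {α : Type*} [DecidableEq α] (l m : List α) (k : ℕ) :
    k ≤ lcp l m ↔ k ≤ l.length ∧ k ≤ m.length ∧ l.take k = m.take k := by
  induction l generalizing m k with
  | nil =>
    simp only [lcp]
    constructor
    · intro h; have : k = 0 := by omega
      subst this; simp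
    · intro h; simpa using h.1
  | cons x l ih =>
    cases m with
    | nil =>
      simp only [lcp]
      constructor
      · intro h; have : k = 0 := by omega
        subst this; simp
      · intro h; simpa using h.2.1
    | cons y m =>
      cases k with
      | zero => simp
      | succ k =>
        by_cases h : x = y
        · subst h
          simp [lcp, ih]
        · simp [lcp, h]

variable {α : Type*} [DecidableEq α]

def cc (g h : FreeGroup α) : ℕ := lcp g.toWord h.toWord

theorem le_cc (g h : FreeGroup α) (k : ℕ) :
    k ≤ cc g h ↔ k ≤ g.norm ∧ k ≤ h.norm ∧ g.toWord.take k = h.toWord.take k := le_lcp _ _ _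

theorem cc_comm (g h : FreeGroup α) : cc g h = cc h g := by
  apply le_antisymm
  · obtain ⟨a, b, c⟩ := (le_cc g h _).1 le_rfl
    exact (le_cc h g _).2 ⟨b, a, c.symm⟩
  · obtain ⟨a, b, c⟩ := (le_cc h g _).1 le_rfl
    exact (le_cc g h _).2 ⟨b, a, c.symm⟩

theorem cc_trans (g h k : FreeGroup α) (m : ℕ) (h1 : m ≤ cc g h) (h2 : m ≤ cc h k) : m ≤ cc g k := by
  obtain ⟨a, b, c⟩ := (le_cc _ _ _).1 h1
  obtain ⟨a', b', c'⟩ := (le_cc _ _ _).1 h2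
  exact (le_cc _ _ _).2 ⟨a, b', c.trans c'⟩

theorem cc_iso (g h k : FreeGroup α) (h1 : cc h k < cc g h) : cc g k = cc h k := by
  apply le_antisymm
  · by_contra hc
    push Not at hc
    have : cc h k + 1 ≤ cc h k := cc_trans h g k _ (by rw [cc_comm h g]; omega) (by omega)
    omega
  · exact cc_trans g h k _ h1.le le_rfl

theorem norm_inv_mul (g h : FreeGroup α) : (g⁻¹ * h).norm + 2 * cc g h = g.norm + h.norm := by
  obtain ⟨p, a, b, h1, h2, h3, h4⟩ := lcp_spec g.toWord h.toWord
  have hg : g = FreeGroup.mk p * FreeGroup.mk a := by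
    rw [FreeGroup.mul_mk, ← h1, FreeGroup.mk_toWord]
  have hh : h = FreeGroup.mk p * FreeGroup.mk b := by
    rw [FreeGroup.mul_mk, ← h2, FreeGroup.mk_toWord]
  have e : g⁻¹ * h = FreeGroup.mk (FreeGroup.invRev a ++ b) := by
    rw [hg, hh, ← FreeGroup.mul_mk, ← FreeGroup.inv_mk]; group
  have ra : FreeGroup.IsReduced a := by
    have : FreeGroup.IsReduced g.toWord := FreeGroup.isReduced_toWord
    rw [h1] at this
    exact List.IsChain.right_of_append this
  have rb : FreeGroup.IsReduced b := by
    have : FreeGroup.IsReduced h.toWord := FreeGroup.isReduced_toWord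
    rw [h2] at this
    exact List.IsChain.right_of_append this
  have r : FreeGroup.IsReduced (FreeGroup.invRev a ++ b) := by
    unfold FreeGroup.IsReduced
    rw [List.isChain_append]
    refine ⟨?_, rb, ?_⟩
    · have : FreeGroup.IsReduced (FreeGroup.invRev a) := by
        rw [FreeGroup.isReduced_iff_reduce_eq, FreeGroup.reduce_invRev, ra.reduce_eq]
      exact this
    · cases a with
      | nil => simp
      | cons x a =>
        intro z hz y hy
        have hz' : z = (x.1, !x.2) := by
          simp [FreeGroup.invRev] at hz
          exact hz.symm
        have hxy := h4 x (by simp) y hy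
        subst hz'
        intro hx
        simp at hx ⊢
        by_contra hc
        apply hxy
        ext
        · rw [hx]
        · rcases x with ⟨x1, x2⟩; rcases y with ⟨y1, y2⟩
          cases x2 <;> cases y2 <;> simp_all
  have hn : (g⁻¹ * h).norm = a.length + b.length := by
    rw [e, FreeGroup.norm, FreeGroup.toWord_mk, r.reduce_eq]; simp
  rw [hn, cc, ← h3, FreeGroup.norm, FreeGroup.norm, h1, h2]
  simp; ring

/-- letters of the inverse -/
theorem cc_inv_lt (g : FreeGroup α) (hg : g ≠ 1) : 2 * cc g g⁻¹ < g.norm := by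
  by_contra hc
  push Not at hc
  obtain ⟨h1, -, h3⟩ := (le_cc g g⁻¹ _).1 le_rfl
  have hpos : 0 < g.norm := Nat.pos_of_ne_zero (by rwa [Ne, FreeGroup.norm_eq_zero])
  set w := g.toWord with hw
  have hlen : g.norm = w.length := rfl
  have hinv : g⁻¹.toWord = FreeGroup.invRev w := FreeGroup.toWord_inv g
  have key : ∀ i (hi : i < cc g g⁻¹), ∃ (h : i < w.length) (h' : w.length - 1 - i < w.length),
      w[i] = ((w[w.length - 1 - i]).1, !(w[w.length - 1 - i]).2) := by
    intro i hi
    refine ⟨by omega, by omega, ?_⟩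
    have e := congrArg (fun l => l[i]?) h3
    simp only [List.getElem?_take, hi, if_true, hinv] at e
    rw [List.getElem?_eq_getElem (by omega), FreeGroup.invRev, List.getElem?_reverse (by simp; omega)] at e
    simp only [List.length_map, List.getElem?_map] at e
    rw [List.getElem?_eq_getElem (by omega)] at e
    simpa using e
  rcases Nat.even_or_odd' w.length with ⟨k, hk | hk⟩
  · have red : FreeGroup.IsReduced w := FreeGroup.isReduced_toWord
    obtain ⟨a, b, e⟩ := key (k - 1) (by omega)
    have e1 : w.length - 1 - (k - 1) = k - 1 + 1 := by omega
    simp only [e1] at e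
    have := List.isChain_iff_getElem.1 red (k - 1) (by omega)
    rw [e] at this
    simp at this
  · obtain ⟨a, b, e⟩ := key k (by omega)
    have e1 : w.length - 1 - k = k := by omega
    simp only [e1] at e
    have := congrArg Prod.snd e
    simp at this

end words
end EH
end


noncomputable section
namespace EH
section nielsen

def bar {β : Type*} (s : β × Bool) : β × Bool := (s.1, !s.2)

theorem bar_bar {β : Type*} (s : β × Bool) : bar (bar s) = s := by simp [bar]

theorem bar_ne {β : Type*} (s : β × Bool) : s ≠ bar s := by
  rcases s with ⟨a, b⟩; cases b <;> simp [bar]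

theorem eq_or_bar {β : Type*} (s t : β × Bool) (h : s.1 = t.1) : s = t ∨ s = bar t := by
  rcases s with ⟨a, b⟩; rcases t with ⟨c, d⟩
  simp at h; subst h
  cases b <;> cases d <;> simp [bar]

theorem growth {α β : Type*} [DecidableEq α] (w : β × Bool → FreeGroup α)
    (hinv : ∀ s, w (bar s) = (w s)⁻¹)
    (H : ∀ s t u, s ≠ t → u ≠ bar t → cc (w s) (w t) + cc (w (bar t)) (w u) < (w t).norm) :
    ∀ (L : List (β × Bool)) (s : β × Bool), FreeGroup.IsReduced (s :: L) → ∀ t, t ≠ s →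
      cc ((s :: L).map w).prod (w t) = cc (w s) (w t) ∧
      L.length + 1 + cc (w s) (w t) ≤ ((s :: L).map w).prod.norm := by
  intro L
  induction L with
  | nil =>
    intro s _ t ht
    simp
    have := H t s s ht (bar_ne s)
    rw [cc_comm]; omega
  | cons s' L ih =>
    intro s hs t ht
    have hs1 : FreeGroup.IsReduced (s' :: L) := List.IsChain.of_cons hs
    have hne : bar s ≠ s' := by
      have h1 : s.1 = s'.1 → s.2 = s'.2 := (List.isChain_cons_cons.1 hs).1
      rintro rfl
      have := h1 rfl
      simp [bar] at this
    obtain ⟨i1, i2⟩ := ih s' hs1 (bar s) hne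
    set V' := ((s' :: L).map w).prod with hV'
    have hV : ((s :: s' :: L).map w).prod = w s * V' := by simp [hV']
    rw [hV]
    have n1 := norm_inv_mul (w (bar s)) V'
    rw [hinv s, inv_inv, FreeGroup.norm_inv_eq, ← hinv s, cc_comm, i1] at n1
    have n2 := norm_inv_mul (w s * V') (w s)
    rw [show (w s * V')⁻¹ * w s = V'⁻¹ by group, FreeGroup.norm_inv_eq] at n2
    have h3 := H t s s' ht (Ne.symm hne)
    rw [cc_comm (w (bar s))] at h3
    rw [cc_comm (w t)] at h3
    refine ⟨?_, ?_⟩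
    · apply cc_iso
      omega
    · simp only [List.length_cons]
      omega

variable {n : ℕ}

def sw (φ : MulAut (F n)) (s : Fin n × Bool) : F n := φ (FreeGroup.mk [s])

theorem mk_bar (s : Fin n × Bool) : (FreeGroup.mk [bar s] : F n) = (FreeGroup.mk [s])⁻¹ := by
  rw [FreeGroup.inv_mk]; rfl

theorem sw_bar (φ : MulAut (F n)) (s : Fin n × Bool) : sw φ (bar s) = (sw φ s)⁻¹ := by
  rw [sw, mk_bar, map_inv]; rfl

theorem sw_prod (φ : MulAut (F n)) (L : List (Fin n × Bool)) : (L.map (sw φ)).prod = φ (FreeGroup.mk L) := by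
  induction L with
  | nil => exact (map_one φ).symm
  | cons s L ih =>
    rw [List.map_cons, List.prod_cons, ih, sw, ← map_mul, FreeGroup.mul_mk]; rfl

def IsSigned (φ : MulAut (F n)) : Prop := ∀ i, ∃ s, φ (FreeGroup.of i) = FreeGroup.mk [s]

theorem signed_of_H (φ : MulAut (F n))
    (H : ∀ s t u, s ≠ t → u ≠ bar t → cc (sw φ s) (sw φ t) + cc (sw φ (bar t)) (sw φ u) < (sw φ t).norm) :
    IsSigned φ := by
  have h1 : ∀ a : Fin n, ∃ s : Fin n × Bool, sw φ s = FreeGroup.of a := by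
    intro a
    obtain ⟨v, hv⟩ := φ.surjective (FreeGroup.of a)
    have hvr : FreeGroup.IsReduced v.toWord := FreeGroup.isReduced_toWord
    have e : φ (FreeGroup.mk v.toWord) = FreeGroup.of a := by rw [FreeGroup.mk_toWord, hv]
    rw [← sw_prod] at e
    rcases hL : v.toWord with _ | ⟨s, L⟩
    · rw [hL] at e; simp at e
    · rw [hL] at e hvr
      have := (growth (sw φ) (sw_bar φ) H L s hvr (bar s) (bar_ne s).symm).2
      rw [e, FreeGroup.norm_of] at this
      have : L = [] := List.eq_nil_of_length_eq_zero (by omega)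
      subst this
      exact ⟨s, by simpa using e⟩
  choose σ hσ using h1
  have inj : Function.Injective (fun a => (σ a).1) := by
    intro a b hab
    rcases eq_or_bar _ _ hab with h | h
    · have := (hσ a).symm.trans ((congrArg (sw φ) h).trans (hσ b))
      exact FreeGroup.of_injective this
    · have := (hσ a).symm.trans (congrArg (sw φ) h)
      rw [sw_bar, hσ b] at this
      have h2 := congrArg FreeGroup.toWord this
      simp [FreeGroup.toWord_inv, FreeGroup.invRev] at h2
  have surj := Finite.surjective_of_injective inj
  intro i
  obtain ⟨a, ha⟩ := surj i
  rcases eq_or_bar (i, true) (σ a) ha.symm with h | h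
  · refine ⟨(a, true), ?_⟩
    have := hσ a
    rw [← h] at this
    exact this
  · refine ⟨bar (a, true), ?_⟩
    have := sw_bar φ (σ a)
    rw [← h, hσ a] at this
    rw [mk_bar]
    exact this

/-- the N2 weight -/
def kap (l : List (Fin n × Bool)) : ℕ :=
  Nat.ofDigits (2 * n + 2) (l.map fun s => 2 * (s.1 : ℕ) + s.2.toNat)

def half (g : F n) : List (Fin n × Bool) := g.toWord.take (g.norm / 2)

def tau (g : F n) : ℕ := kap (half g) + kap (half g⁻¹)

theorem tau_inv (g : F n) : tau g⁻¹ = tau g := by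
  rw [tau, tau, inv_inv, add_comm]

theorem kap_append (l m : List (Fin n × Bool)) : kap (l ++ m) = kap l + (2 * n + 2) ^ l.length * kap m := by
  simp [kap, Nat.ofDigits_append]

theorem kap_inj (l m : List (Fin n × Bool)) (h : l.length = m.length) (e : kap l = kap m) : l = m := by
  have hd : ∀ s : Fin n × Bool, 2 * (s.1 : ℕ) + s.2.toNat < 2 * n + 2 := by
    rintro ⟨i, b⟩
    have := i.2
    cases b <;> simp <;> omega
  have := Nat.ofDigits_inj_of_len_eq (b := 2 * n + 2) (by omega)
    (L1 := l.map fun s : Fin n × Bool => 2 * (s.1 : ℕ) + s.2.toNat) (L2 := m.map fun s : Fin n × Bool => 2 * (s.1 : ℕ) + s.2.toNat)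
    (by simpa using h)
    (by intro x hx; rw [List.mem_map] at hx; obtain ⟨s, _, rfl⟩ := hx; exact hd s)
    (by intro x hx; rw [List.mem_map] at hx; obtain ⟨s, _, rfl⟩ := hx; exact hd s) e
  refine List.map_injective_iff.2 ?_ this
  rintro ⟨i, b⟩ ⟨j, c⟩ hs
  simp only at hs
  have h1 : (i : ℕ) = j ∧ b = c := by
    cases b <;> cases c <;> simp at hs ⊢ <;> omega
  exact Prod.ext (Fin.ext h1.1) h1.2

/-- replacing the initial half of `y` -/
theorem half_move (x y : F n) (k : ℕ) (hy : y.norm = 2 * k) (hc : cc x y = k) (hx : 2 * k ≤ x.norm)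
    (ht : tau x ≤ tau (y⁻¹ * x)) : kap (y.toWord.take k) ≤ kap (y⁻¹.toWord.take k) := by
  obtain ⟨c1, c2, c3⟩ := (le_cc x y k).1 hc.ge
  set p := y.toWord.take k with hp
  set q := y⁻¹.toWord.take k with hq
  have lp : p.length = k := by rw [hp, List.length_take]; exact min_eq_left c2
  have lq : q.length = k := by
    rw [hq, List.length_take]; apply min_eq_left
    have : y⁻¹.norm = 2 * k := by rw [FreeGroup.norm_inv_eq, hy]
    rw [FreeGroup.norm] at this; omega
  set a := x.toWord.drop k with ha
  have hxa : x.toWord = p ++ a := by rw [← c3, ha, List.take_append_drop]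
  have hyq : y.toWord = p ++ FreeGroup.invRev q := by
    have h1 : y.toWord = FreeGroup.invRev y⁻¹.toWord := by
      rw [FreeGroup.toWord_inv, FreeGroup.invRev_invRev]
    have h2 : y.toWord.drop k = FreeGroup.invRev q := by
      rw [hq, FreeGroup.toWord_inv, FreeGroup.invRev, FreeGroup.invRev, List.take_reverse]
      simp only [List.length_map, List.map_reverse, List.reverse_reverse, ← List.map_drop]
      have : y.toWord.length - k = k := by
        have : y.toWord.length = 2 * k := hy
        omega
      rw [this]
      simp
      have hid : ((fun g : Fin n × Bool => (g.1, !g.2)) ∘ fun g : Fin n × Bool => (g.1, !g.2)) = id := by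
        funext g; simp
      rw [hid, List.map_id]
    rw [← h2, hp, List.take_append_drop]
  have nrm := norm_inv_mul y x
  rw [cc_comm, hc, hy] at nrm
  have nrm' : (y⁻¹ * x).norm = x.norm := by omega
  have lx : x.norm = k + a.length := by
    rw [FreeGroup.norm, hxa, List.length_append, lp]
  have ew : (y⁻¹ * x).toWord = q ++ a := by
    have e1 : y⁻¹ * x = FreeGroup.mk (q ++ a) := by
      rw [← FreeGroup.mk_toWord (x := y), ← FreeGroup.mk_toWord (x := x), hyq, hxa,
        ← FreeGroup.mul_mk, ← FreeGroup.mul_mk, ← FreeGroup.mul_mk, ← FreeGroup.inv_mk]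
      group
    have e2 : (y⁻¹ * x).toWord.Sublist (q ++ a) := by
      rw [e1, FreeGroup.toWord_mk]
      exact FreeGroup.Red.sublist FreeGroup.reduce.red
    apply e2.eq_of_length
    have : (y⁻¹ * x).toWord.length = x.norm := nrm'
    rw [this, lx, List.length_append, lq]
  have hh1 : half x = p ++ a.take (x.norm / 2 - k) := by
    rw [half, hxa, List.take_append, lp, List.take_of_length_le (by omega)]
  have hh2 : half (y⁻¹ * x) = q ++ a.take (x.norm / 2 - k) := by
    rw [half, nrm', ew, List.take_append, lq, List.take_of_length_le (by omega)]
  have hh3 : half x⁻¹ = half (y⁻¹ * x)⁻¹ := by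
    rw [half, half, FreeGroup.norm_inv_eq, FreeGroup.norm_inv_eq, nrm', FreeGroup.toWord_inv,
      FreeGroup.toWord_inv, ew, hxa, FreeGroup.invRev_append, FreeGroup.invRev_append,
      List.take_append_of_le_length, List.take_append_of_le_length] <;>
    · rw [FreeGroup.invRev_length]; omega
  rw [tau, tau, hh1, hh2, hh3, kap_append, kap_append, lp, lq] at ht
  omega

theorem H_of_min (φ : MulAut (F n))
    (M1 : ∀ s t : Fin n × Bool, s.1 ≠ t.1 → (sw φ s).norm ≤ (sw φ s * sw φ t).norm)
    (M2 : ∀ s t : Fin n × Bool, s.1 ≠ t.1 → (sw φ s * sw φ t).norm = (sw φ s).norm →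
      tau (sw φ s) ≤ tau (sw φ s * sw φ t)) :
    ∀ s t u, s ≠ t → u ≠ bar t → cc (sw φ s) (sw φ t) + cc (sw φ (bar t)) (sw φ u) < (sw φ t).norm := by
  have ne1 : ∀ s, sw φ s ≠ 1 := by
    intro s hs
    rw [sw, map_eq_one_iff _ φ.injective] at hs
    have := congrArg FreeGroup.toWord hs
    simp [FreeGroup.reduce_singleton] at this
  have le1 : ∀ s t : Fin n × Bool, s.1 ≠ t.1 → 2 * cc (sw φ s) (sw φ t) ≤ (sw φ t).norm := by
    intro s t hst
    have h1 := M1 (bar s) t hst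
    have h2 := norm_inv_mul (sw φ s) (sw φ t)
    rw [sw_bar, FreeGroup.norm_inv_eq] at h1
    omega
  have le2 : ∀ s t : Fin n × Bool, s ≠ t → 2 * cc (sw φ s) (sw φ t) ≤ (sw φ t).norm ∧
      (s.1 = t.1 → 2 * cc (sw φ s) (sw φ t) < (sw φ t).norm) := by
    intro s t hst
    by_cases h : s.1 = t.1
    · rcases eq_or_bar s t h with h | h
      · exact absurd h hst
      · have : 2 * cc (sw φ s) (sw φ t) < (sw φ t).norm := by
          rw [h, sw_bar, cc_comm]; exact cc_inv_lt _ (ne1 t)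
        exact ⟨this.le, fun _ => this⟩
    · exact ⟨le1 s t h, fun h' => absurd h' h⟩
  have kle : ∀ s t : Fin n × Bool, s.1 ≠ t.1 → ∀ k, (sw φ t).norm = 2 * k → cc (sw φ s) (sw φ t) = k →
      kap ((sw φ t).toWord.take k) ≤ kap ((sw φ (bar t)).toWord.take k) := by
    intro s t hst k hk hc
    rw [sw_bar]
    apply half_move (sw φ s) (sw φ t) k hk hc
    · have := le1 t s hst.symm
      rwa [cc_comm, hc] at this
    · have h2 := norm_inv_mul (sw φ s) (sw φ t)
      have := M2 (bar s) t hst (by rw [sw_bar, FreeGroup.norm_inv_eq]; omega)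
      rw [sw_bar, tau_inv, ← tau_inv ((sw φ s)⁻¹ * sw φ t)] at this
      simpa using this
  intro s t u hst hut
  have h1 := le2 s t hst
  have h2 := le2 u (bar t) hut
  rw [cc_comm (sw φ u), show (sw φ (bar t)).norm = (sw φ t).norm by rw [sw_bar, FreeGroup.norm_inv_eq]] at h2
  by_contra hc
  have e1 : s.1 ≠ t.1 := fun h => by have := h1.2 h; omega
  have e2 : u.1 ≠ (bar t).1 := fun h => by have := h2.2 h; omega
  have k1 := kle s t e1 (cc (sw φ s) (sw φ t)) (by omega) rfl
  have k2 := kle u (bar t) e2 (cc (sw φ s) (sw φ t)) (by rw [sw_bar, FreeGroup.norm_inv_eq]; omega)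
    (by rw [cc_comm]; omega)
  rw [bar_bar] at k2
  have hn : (sw φ (bar t)).norm = (sw φ t).norm := by rw [sw_bar, FreeGroup.norm_inv_eq]
  have hl : cc (sw φ s) (sw φ t) ≤ (sw φ t).norm := by omega
  have eq := kap_inj _ _ (by
    rw [List.length_take, List.length_take]
    change min _ (sw φ t).norm = min _ (sw φ (bar t)).norm
    rw [hn]) (le_antisymm k1 k2)
  have := (le_cc (sw φ t) (sw φ (bar t)) _).2 ⟨hl, hl.trans hn.ge, eq⟩
  have h3 := cc_inv_lt _ (ne1 t)
  rw [← sw_bar] at h3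
  omega

end nielsen
end EH
end


noncomputable section
namespace EH
section final
variable {n : ℕ}

theorem R_mem {i j : Fin n} (h : i ≠ j) : R i j ∈ NN n := Subgroup.subset_closure ⟨i, j, h, Or.inl rfl⟩
theorem L_mem {i j : Fin n} (h : i ≠ j) : L i j ∈ NN n := Subgroup.subset_closure ⟨i, j, h, Or.inr rfl⟩

theorem mk_true (i : Fin n) : (FreeGroup.mk [(i, true)] : F n) = FreeGroup.of i := rfl
theorem mk_false (i : Fin n) : (FreeGroup.mk [(i, false)] : F n) = (FreeGroup.of i)⁻¹ := by
  rw [FreeGroup.of, FreeGroup.inv_mk]; rfl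

theorem exists_move (s t : Fin n × Bool) (hst : s.1 ≠ t.1) :
    ∃ h ∈ NN n, h (FreeGroup.mk [s]) = FreeGroup.mk [s] * FreeGroup.mk [t] ∧
      ∀ i, i ≠ s.1 → h (FreeGroup.of i) = FreeGroup.of i := by
  rcases s with ⟨i, b⟩; rcases t with ⟨j, d⟩
  simp only at hst
  cases b <;> cases d
  · refine ⟨L i j, L_mem hst, ?_, fun k hk => A_ne hk _ _⟩
    rw [mk_false, mk_false, map_inv, L, A_self, X_val hst.symm]; simp
  · refine ⟨(L i j)⁻¹, inv_mem (L_mem hst), ?_, fun k hk => ?_⟩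
    · rw [mk_false, mk_true, map_inv, L, A_inv, A_self, Subgroup.coe_inv, X_val hst.symm]; simp
    · rw [L, A_inv]; exact A_ne hk _ _
  · refine ⟨(R i j)⁻¹, inv_mem (R_mem hst), ?_, fun k hk => ?_⟩
    · rw [mk_false, mk_true, R, A_inv, A_self]; simp [X_val hst.symm]
    · rw [R, A_inv]; exact A_ne hk _ _
  · refine ⟨R i j, R_mem hst, ?_, fun k hk => A_ne hk _ _⟩
    rw [mk_true, mk_true, R, A_self, X_val hst.symm]; simp

theorem sum_compare (a b : Fin n → ℕ) (i : Fin n) (h : ∀ k, k ≠ i → a k = b k) :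
    (∑ k, a k) + b i = (∑ k, b k) + a i := by
  rw [← Finset.add_sum_erase _ a (Finset.mem_univ i), ← Finset.add_sum_erase _ b (Finset.mem_univ i),
    Finset.sum_congr rfl (fun k hk => h k (Finset.ne_of_mem_erase hk))]
  ring

def mu (φ : MulAut (F n)) : ℕ ×ₗ ℕ :=
  toLex (∑ i, (φ (FreeGroup.of i)).norm, ∑ i, tau (φ (FreeGroup.of i)))

theorem norm_sw (φ : MulAut (F n)) (s : Fin n × Bool) : (sw φ s).norm = (φ (FreeGroup.of s.1)).norm := by
  rcases s with ⟨i, b⟩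
  cases b
  · rw [sw, mk_false, map_inv, FreeGroup.norm_inv_eq]
  · rfl

theorem tau_sw (φ : MulAut (F n)) (s : Fin n × Bool) : tau (sw φ s) = tau (φ (FreeGroup.of s.1)) := by
  rcases s with ⟨i, b⟩
  cases b
  · rw [sw, mk_false, map_inv, tau_inv]
  · rfl

theorem nielsen (φ : MulAut (F n)) : ∃ h ∈ NN n, IsSigned (φ * h) := by
  obtain ⟨_, ⟨h, hh, rfl⟩, hmin⟩ := WellFounded.has_min (wellFounded_lt (α := ℕ ×ₗ ℕ))
    ((fun h => mu (φ * h)) '' (NN n : Set (MulAut (F n)))) ⟨_, 1, one_mem _, rfl⟩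
  refine ⟨h, hh, ?_⟩
  set ψ := φ * h with hψ
  have hm : ∀ h' ∈ NN n, ¬ mu (ψ * h') < mu ψ := fun h' hh' =>
    hmin _ ⟨h * h', mul_mem hh hh', by simp only [hψ, mul_assoc]⟩
  have mv : ∀ s t : Fin n × Bool, s.1 ≠ t.1 →
      ¬ ((sw ψ s * sw ψ t).norm < (sw ψ s).norm ∨
        ((sw ψ s * sw ψ t).norm = (sw ψ s).norm ∧ tau (sw ψ s * sw ψ t) < tau (sw ψ s))) := by
    intro s t hst hlt
    obtain ⟨k, hk, k1, k2⟩ := exists_move s t hst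
    apply hm k hk
    have e : sw (ψ * k) s = sw ψ s * sw ψ t := by
      rw [sw, MulAut.mul_apply, k1, map_mul]; rfl
    rw [← e, norm_sw, tau_sw, norm_sw, tau_sw] at hlt
    have k3 : ∀ i, i ≠ s.1 → (ψ * k) (FreeGroup.of i) = ψ (FreeGroup.of i) := by
      intro i hi; rw [MulAut.mul_apply, k2 i hi]
    have s1 := sum_compare (fun i => ((ψ * k) (FreeGroup.of i)).norm) (fun i => (ψ (FreeGroup.of i)).norm) s.1
      (fun i hi => by simp only [k3 i hi])
    have s2 := sum_compare (fun i => tau ((ψ * k) (FreeGroup.of i))) (fun i => tau (ψ (FreeGroup.of i))) s.1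
      (fun i hi => by simp only [k3 i hi])
    rw [mu, mu, Prod.Lex.toLex_lt_toLex]
    simp only
    rcases hlt with hl | ⟨hl, hl'⟩
    · left; omega
    · right; constructor <;> omega
  apply signed_of_H
  apply H_of_min
  · intro s t hst
    have := mv s t hst
    push Not at this
    exact this.1
  · intro s t hst he
    have := mv s t hst
    push Not at this
    exact this.2 he

theorem signed_finite : {φ : MulAut (F n) | IsSigned φ}.Finite := by
  classical
  let g : {φ : MulAut (F n) | IsSigned φ} → (Fin n → Fin n × Bool) := fun φ i => (φ.2 i).choose
  have hg : ∀ φ i, φ.1 (FreeGroup.of i) = FreeGroup.mk [g φ i] := fun φ i => (φ.2 i).choose_spec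
  have : Function.Injective g := by
    intro φ ψ e
    apply Subtype.ext
    apply aut_ext
    intro k
    rw [hg, hg, e]
  exact Set.finite_coe_iff.1 (Finite.of_injective g this)
end final
end EH
end

noncomputable section
namespace EH
section final2
variable {n : ℕ}

theorem NN_finiteIndex : (NN n).FiniteIndex := by
  have hW : Finite {φ : MulAut (F n) | IsSigned φ} := signed_finite
  have : Function.Surjective (fun φ : {φ : MulAut (F n) | IsSigned φ} => (QuotientGroup.mk φ.1 : MulAut (F n) ⧸ NN n)) := by
    intro x
    obtain ⟨φ, rfl⟩ := QuotientGroup.mk_surjective x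
    obtain ⟨h, hh, hs⟩ := nielsen φ
    refine ⟨⟨φ * h, hs⟩, ?_⟩
    exact (QuotientGroup.mk_mul_of_mem φ hh)
  have := Finite.of_surjective _ this
  exact Subgroup.finiteIndex_of_finite_quotient

theorem Aut_fg : Group.FG (MulAut (F n)) := by
  rw [Group.fg_iff]
  refine ⟨{x | ∃ i j, i ≠ j ∧ (x = R i j ∨ x = L i j)} ∪ {φ : MulAut (F n) | IsSigned φ}, ?_, ?_⟩
  · rw [eq_top_iff]
    intro φ _
    obtain ⟨h, hh, hs⟩ := nielsen φ
    have h1 : h ∈ Subgroup.closure ({x | ∃ i j, i ≠ j ∧ (x = R i j ∨ x = L i j)} ∪ {φ : MulAut (F n) | IsSigned φ}) :=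
      Subgroup.closure_mono Set.subset_union_left hh
    have h2 : φ * h ∈ Subgroup.closure ({x | ∃ i j, i ≠ j ∧ (x = R i j ∨ x = L i j)} ∪ {φ : MulAut (F n) | IsSigned φ}) :=
      Subgroup.subset_closure (Or.inr hs)
    have := mul_mem h2 (inv_mem h1)
    rwa [mul_inv_cancel_right] at this
  · apply Set.Finite.union _ signed_finite
    apply Set.Finite.subset (Set.finite_range (fun p : Fin n × Fin n => R p.1 p.2) |>.union
      (Set.finite_range (fun p : Fin n × Fin n => L p.1 p.2)))
    rintro _ ⟨i, j, _, rfl | rfl⟩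
    · exact Or.inl ⟨(i, j), rfl⟩
    · exact Or.inr ⟨(i, j), rfl⟩

theorem main (hn : 3 ≤ n) (I : Subgroup (MulAut (F n))) [I.Normal]
    (hK : ∀ i j, i ≠ j → K i j ∈ I) (Γ : Subgroup (MulAut (F n))) [Γ.FiniteIndex]
    (h : ⁅I, I⁆ ≤ ⁅Γ, Γ⁆) :
    Finite (Abelianization Γ) ∧ ∀ φ : Γ →* Multiplicative ℝ, φ = 1 := by
  have hv : ∀ φ : Γ →* Multiplicative ℝ, φ = 1 := by
    intro f
    have := NN_finiteIndex (n := n)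
    exact vanish_of_finite_index Γ (NN n) f (N_vanish hn I hK Γ h f)
  refine ⟨?_, hv⟩
  have := Aut_fg (n := n)
  have : Group.FG Γ := Subgroup.fg_of_index_ne_zero Γ
  exact finite_ab hv

end final2
end EH
end


theorem IA_normal (n : ℕ) : (IA n).Normal := by
  constructor
  intro a ha g x
  have h1 : (g * a * g⁻¹) x = g (a (g⁻¹ x)) := rfl
  have h2 : Abelianization.of (a (g⁻¹ x)) = Abelianization.of (g⁻¹ x) := ha _
  have h3 := congrArg (Abelianization.map (g : FreeGrp n →* FreeGrp n)) h2
  rw [Abelianization.map_of, Abelianization.map_of] at h3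
  rw [h1]
  refine h3.trans ?_
  congr 1
  exact g.apply_symm_apply x

theorem K_mem_IA {n : ℕ} (i j : Fin n) : EH.K i j ∈ IA n := by
  intro x
  have : (Abelianization.of).comp (EH.K i j).toMonoidHom = (Abelianization.of : FreeGrp n →* _) := by
    apply FreeGroup.ext_hom
    intro k
    change Abelianization.of (EH.K i j (FreeGroup.of k)) = _
    by_cases hk : k = i
    · subst hk
      rw [EH.K, EH.A_self, map_mul, map_mul, Subgroup.coe_inv, map_inv, mul_comm (Abelianization.of (EH.X k j : FreeGrp n))⁻¹,
        inv_mul_cancel_right]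
    · rw [EH.K, EH.A_ne hk]
  exact DFunLike.congr_fun this x

/-- Ershov–He.  For `n ≥ 3`, if `Γ` is a finite index subgroup of
`Aut(Fₙ)` whose commutator subgroup `[Γ, Γ]` contains `[IAₙ, IAₙ]`, then `Γ` has finite
abelianization; in particular every group homomorphism `Γ → (ℝ, +)` is trivial. -/
theorem ershov_he_commutator_contains
    (n : ℕ) (hn : 3 ≤ n)
    (Γ : Subgroup (AutF n)) [Γ.FiniteIndex]
    (h : ⁅IA n, IA n⁆ ≤ ⁅Γ, Γ⁆) :
    Finite (Abelianization Γ) ∧ ∀ φ : Γ →* Multiplicative ℝ, φ = 1 := by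
  haveI := IA_normal n
  exact EH.main hn (IA n) (fun i j _ => K_mem_IA i j) Γ h
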